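/- arXiv:2109.04613 — 2 statements merged into one kernel-verified Lean document; each statement's English description precedes it below -/
import Mathlib

section
/- Let R be a commutative noetherian ring with identity, a an ideal of R, and M a weakly Laskerian R-module (the set Ass_R(M/N) of associated primes is finite for every submodule N of M) with Supp_R M ⊆ V(a). Then M is a-cofinite if and only if Hom_R(R/a, M) and Ext^1_R(R/a, M) are finitely generated R-modules. -/
universe u

open CategoryTheory

/-- `Ext^i_R(R/a, M)` as an `R`-module, for `M : ModuleCat R`. -/
noncomputable def extQuot {R : Type u} [CommRing R] (a : Ideal R) (i : ℕ)
    (M : ModuleCat.{u} R) : ModuleCat.{u} R :=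
  ((Ext R (ModuleCat.{u} R) i).obj (Opposite.op (ModuleCat.of R (R ⧸ a)))).obj M

/-- An `R`-module `M` is `a`-cofinite if `Supp M ⊆ V(a)` and `Ext^i_R(R/a, M)` is a
finitely generated `R`-module for every `i ≥ 0`. -/
def IsCofinite {R : Type u} [CommRing R] (a : Ideal R) (M : ModuleCat.{u} R) : Prop :=
  Module.support R M ⊆ PrimeSpectrum.zeroLocus (a : Set R) ∧
    ∀ i : ℕ, Module.Finite R (extQuot a i M)

namespace Cof
open CategoryTheory Abelian

variable {R : Type u} [CommRing R]

open CochainComplex.HomComplex in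
lemma extMk_zero_eq_zero {X Y : ModuleCat.{u} R} (P : ProjectiveResolution X)
    (f : P.complex.X 0 ⟶ Y) (hf : P.complex.d 1 0 ≫ f = 0)
    (h : P.extMk f 1 rfl hf = 0) : f = 0 := by
  rw [← P.extEquivCohomologyClass.apply_eq_iff_eq,
    ProjectiveResolution.extEquivCohomologyClass_extMk, ProjectiveResolution.extEquivCohomologyClass_zero,
    CohomologyClass.mk_eq_zero_iff] at h
  rw [Cocycle.toSingleMk_mem_coboundaries_iff _ _ _ _ _ 1 (by simp)] at h
  obtain ⟨g, hg⟩ := h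
  have : P.cochainComplex.d (-((0:ℕ):ℤ)) 1 = 0 := by
    apply Limits.IsZero.eq_of_tgt
    exact CochainComplex.isZero_of_isStrictlyLE _ 0 1
  rw [this, Limits.zero_comp] at hg
  rw [← cancel_epi (P.cochainComplexXIso (-((0:ℕ):ℤ)) 0 rfl).hom]
  simp only [← hg, Limits.comp_zero]

def cyc {X : ModuleCat.{u} R} (P : ProjectiveResolution X) (Y : ModuleCat.{u} R) (n : ℕ) :
    Submodule R (P.complex.X n ⟶ Y) where
  carrier := {f | P.complex.d (n+1) n ≫ f = 0}
  add_mem' := by intro f g hf hg; simp_all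
  zero_mem' := by simp
  smul_mem' := by intro r f hf; simp_all

lemma mem_cyc {X : ModuleCat.{u} R} (P : ProjectiveResolution X) (Y : ModuleCat.{u} R) (n : ℕ)
    (f : P.complex.X n ⟶ Y) : f ∈ cyc P Y n ↔ P.complex.d (n+1) n ≫ f = 0 := Iff.rfl

noncomputable def toExt {X : ModuleCat.{u} R} (P : ProjectiveResolution X) (Y : ModuleCat.{u} R)
    (n : ℕ) : cyc P Y n →ₗ[R] Abelian.Ext X Y n where
  toFun f := P.extMk f.1 (n+1) rfl ((mem_cyc P Y n _).1 f.2)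
  map_add' f g := by
    rw [ProjectiveResolution.add_extMk]; rfl
  map_smul' r f := by
    rw [Abelian.Ext.smul_eq_comp_mk₀]
    simp only [RingHom.id_apply]
    rw [ProjectiveResolution.extMk_comp_mk₀]
    congr 1

lemma toExt_surjective {X : ModuleCat.{u} R} (P : ProjectiveResolution X) (Y : ModuleCat.{u} R)
    (n : ℕ) : Function.Surjective (toExt P Y n) := by
  intro x
  obtain ⟨f, hf, rfl⟩ := P.extMk_surjective x (n+1) rfl
  exact ⟨⟨f, hf⟩, rfl⟩

/-- comparison of finiteness of two quotients of the cycles -/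
lemma finite_iff_of_surj {Z A B : Type u} [AddCommGroup Z] [Module R Z] [AddCommGroup A]
    [Module R A] [AddCommGroup B] [Module R B] (f : Z →ₗ[R] A) (g : Z →ₗ[R] B)
    (hf : Function.Surjective f) (hg : Function.Surjective g)
    (h : ∀ z, f z = 0 ↔ g z = 0) : Module.Finite R A ↔ Module.Finite R B := by
  have hk : LinearMap.ker f = LinearMap.ker g := by
    ext z; simpa using h z
  exact Module.Finite.equiv_iff ((f.quotKerEquivOfSurjective hf).symm.trans
    ((Submodule.quotEquivOfEq _ _ hk).trans (g.quotKerEquivOfSurjective hg)))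

lemma finite_iff_aux {X : ModuleCat.{u} R} (P : ProjectiveResolution X) (Y : ModuleCat.{u} R)
    (n i : ℕ) (hi : (ComplexShape.up ℕ).prev n = i)
    (hk : ∀ f (hf : f ∈ cyc P Y n), toExt P Y n ⟨f, hf⟩ = 0 ↔
      ∃ g : P.complex.X i ⟶ Y, P.complex.d n i ≫ g = f) :
    Module.Finite R ((P.complex.linearYonedaObj R Y).homology n) ↔
      Module.Finite R (Abelian.Ext X Y n) := by
  let K := P.complex.linearYonedaObj R Y
  let S := K.sc' i n (n+1)
  have e1 : K.homology n ≅ S.moduleCatLeftHomologyData.H :=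
    (ShortComplex.homologyMapIso (K.isoSc' i n (n+1) hi (by simp))).trans S.moduleCatHomologyIso
  rw [Module.Finite.equiv_iff e1.toLinearEquiv]
  let e : cyc P Y n ≃ₗ[R] LinearMap.ker S.g.hom :=
    { toFun := fun f => ⟨f.1, f.2⟩
      invFun := fun f => ⟨f.1, f.2⟩
      map_add' := fun _ _ => rfl
      map_smul' := fun _ _ => rfl
      left_inv := fun _ => rfl
      right_inv := fun _ => rfl }
  refine finite_iff_of_surj (Z := cyc P Y n)
    ((LinearMap.range S.moduleCatToCycles).mkQ ∘ₗ e.toLinearMap) (toExt P Y n) ?_ (toExt_surjective P Y n) ?_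
  · exact (Submodule.mkQ_surjective _).comp e.surjective
  · rintro ⟨f, hf⟩
    rw [hk]
    refine Iff.trans (Submodule.Quotient.mk_eq_zero (LinearMap.range S.moduleCatToCycles)
      (x := e ⟨f, hf⟩)) ?_
    constructor
    · rintro ⟨g, hg⟩
      exact ⟨g, congrArg Subtype.val hg⟩
    · rintro ⟨g, hg⟩
      exact ⟨g, Subtype.ext hg⟩

lemma finite_extQuot_iff (a : Ideal R) (i : ℕ) (M : ModuleCat.{u} R) :
    Module.Finite R (extQuot a i M) ↔
      Module.Finite R (Abelian.Ext (ModuleCat.of R (R ⧸ a)) M i) := by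
  let P := ProjectiveResolution.of (ModuleCat.of R (R ⧸ a))
  unfold extQuot
  rw [Module.Finite.equiv_iff (P.isoExt (R := R) i M).toLinearEquiv]
  rcases i with _ | i
  · refine finite_iff_aux P M 0 0 (by simp) ?_
    intro f hf
    constructor
    · intro h
      exact ⟨0, by rw [extMk_zero_eq_zero P f hf h]; simp⟩
    · rintro ⟨g, hg⟩
      have : f = 0 := by rw [← hg, P.complex.shape _ _ (by simp), Limits.zero_comp]
      subst this
      exact map_zero (toExt P M 0)
  · refine finite_iff_aux P M (i+1) i (by simp) ?_
    intro f hf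
    exact P.extMk_eq_zero_iff f _ rfl hf i rfl

end Cof


namespace Cof
open Abelian

variable {R : Type u} [CommRing R]

/-- `Ext^i(R/a, M)` is a noetherian module -/
def FE (a : Ideal R) (i : ℕ) (M : Type u) [AddCommGroup M] [Module R M] : Prop :=
  IsNoetherian R (Abelian.Ext (ModuleCat.of R (R ⧸ a)) (ModuleCat.of R M) i)

section
variable {A B C M : Type u} [AddCommGroup A] [Module R A] [AddCommGroup B] [Module R B]
  [AddCommGroup C] [Module R C] [AddCommGroup M] [Module R M]

lemma ses {f : A →ₗ[R] B} {g : B →ₗ[R] C} (hf : Function.Injective f) (hg : Function.Surjective g)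
    (h : Function.Exact f g) :
    (ShortComplex.mk (ModuleCat.ofHom f) (ModuleCat.ofHom g) (by
      ext x; exact h.apply_apply_eq_zero x)).ShortExact where
  exact := (ShortComplex.ShortExact.moduleCat_exact_iff_function_exact _).2 h
  mono_f := (ModuleCat.mono_iff_injective _).2 hf
  epi_g := (ModuleCat.epi_iff_surjective _).2 hg

/-- induced map on Ext -/
noncomputable def em (a : Ideal R) (i : ℕ) (f : A →ₗ[R] B) :
    Abelian.Ext (ModuleCat.of R (R ⧸ a)) (ModuleCat.of R A) i →ₗ[R]
      Abelian.Ext (ModuleCat.of R (R ⧸ a)) (ModuleCat.of R B) i :=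
  (Ext.mk₀ (ModuleCat.ofHom f)).postcompOfLinear R _ (add_zero i)

lemma em_apply (a : Ideal R) (i : ℕ) (f : A →ₗ[R] B) (x) : em a i f x =
    x.comp (Ext.mk₀ (ModuleCat.ofHom f)) (add_zero i) := rfl

lemma em_comp (a : Ideal R) (i : ℕ) (f : A →ₗ[R] B) (g : B →ₗ[R] C) (x) :
    em a i g (em a i f x) = em a i (g ∘ₗ f) x := by
  simp only [em_apply, ModuleCat.ofHom_comp]
  rw [Ext.comp_assoc_of_second_deg_zero, Ext.mk₀_comp_mk₀]

lemma em_smul {a : Ideal R} (i : ℕ) {r : R} (hr : r ∈ a) (x) :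
    em a i (r • (LinearMap.id : A →ₗ[R] A)) x = 0 := by
  have h1 : em a i (r • (LinearMap.id : A →ₗ[R] A)) x = r • x := by
    rw [Ext.smul_eq_comp_mk₀, em_apply]; rfl
  rw [h1]
  have h2 : r • x = (Ext.mk₀ (r • 𝟙 (ModuleCat.of R (R ⧸ a)))).comp x (zero_add i) := by
    rw [Ext.mk₀_smul, Ext.smul_comp, Ext.mk₀_id_comp]
  have h3 : r • 𝟙 (ModuleCat.of R (R ⧸ a)) = 0 := by
    ext
    change r • (1 : R ⧸ a) = 0
    rw [Algebra.smul_def, mul_one]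
    exact Ideal.Quotient.eq_zero_iff_mem.2 hr
  rw [h2, h3, Ext.mk₀_zero, Ext.zero_comp]

lemma em_exact (a : Ideal R) (i : ℕ) {f : A →ₗ[R] B} {g : B →ₗ[R] C}
    (hf : Function.Injective f) (hg : Function.Surjective g) (h : Function.Exact f g) :
    LinearMap.range (em a i f) = LinearMap.ker (em a i g) := by
  ext x
  constructor
  · rintro ⟨y, rfl⟩
    rw [LinearMap.mem_ker, em_comp, h.linearMap_comp_eq_zero, em_apply]
    have : ModuleCat.ofHom (0 : A →ₗ[R] C) = 0 := rfl
    rw [this, Ext.mk₀_zero, Ext.comp_zero]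
  · intro hx
    exact Ext.covariant_sequence_exact₂ _ (ses hf hg h) x hx

lemma em_injective_zero (a : Ideal R) {f : A →ₗ[R] B} (hf : Function.Injective f) :
    Function.Injective (em a 0 f) := by
  have : Mono (ModuleCat.ofHom f) := (ModuleCat.mono_iff_injective _).2 hf
  exact Ext.postcomp_mk₀_injective_of_mono _ (ModuleCat.ofHom f)

lemma FE.mid {a : Ideal R} {i : ℕ} {f : A →ₗ[R] B} {g : B →ₗ[R] C}
    (hf : Function.Injective f) (hg : Function.Surjective g) (h : Function.Exact f g)
    (hA : FE a i A) (hC : FE a i C) : FE a i B := by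
  unfold FE at *
  exact isNoetherian_of_range_eq_ker _ _ (em_exact a i hf hg h)

lemma FE.right {a : Ideal R} {i : ℕ} {f : A →ₗ[R] B} {g : B →ₗ[R] C}
    (hf : Function.Injective f) (hg : Function.Surjective g) (h : Function.Exact f g)
    (hB : FE a i B) (hA : FE a (i+1) A) : FE a i C := by
  unfold FE at *
  refine isNoetherian_of_range_eq_ker (em a i g)
    ((ses hf hg h).extClass.postcompOfLinear R _ rfl) ?_
  ext x
  constructor
  · rintro ⟨y, rfl⟩
    rw [LinearMap.mem_ker]
    change (y.comp (Ext.mk₀ _) (add_zero i)).comp (ses hf hg h).extClass rfl = 0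
    rw [Ext.comp_assoc_of_second_deg_zero]
    have := (ses hf hg h).comp_extClass
    erw [this]
    rw [Ext.comp_zero]
  · intro hx
    exact Ext.covariant_sequence_exact₃ _ (ses hf hg h) x rfl hx

lemma ker_em (a : Ideal R) {i : ℕ} {f : A →ₗ[R] B} {g : B →ₗ[R] C}
    (hf : Function.Injective f) (hg : Function.Surjective g) (h : Function.Exact f g)
    (hC : FE a i C) : IsNoetherian R (LinearMap.ker (em a (i+1) f)) := by
  unfold FE at *
  let δ := (ses hf hg h).extClass.postcompOfLinear R (ModuleCat.of R (R ⧸ a)) (rfl : i + 1 = i + 1)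
  have : LinearMap.ker (em a (i+1) f) ≤ LinearMap.range δ := by
    intro x hx
    exact Ext.covariant_sequence_exact₁ _ (ses hf hg h) x hx rfl
  exact isNoetherian_of_le this

lemma FE.left {a : Ideal R} {i : ℕ} {f : A →ₗ[R] B} {g : B →ₗ[R] C}
    (hf : Function.Injective f) (hg : Function.Surjective g) (h : Function.Exact f g)
    (hC : FE a i C) (hB : FE a (i+1) B) : FE a (i+1) A := by
  have := ker_em a hf hg h hC
  unfold FE at *
  exact isNoetherian_of_range_eq_ker (LinearMap.ker (em a (i+1) f)).subtype (em a (i+1) f) (by simp)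

lemma FE.left_zero {a : Ideal R} {f : A →ₗ[R] B} (hf : Function.Injective f)
    (hB : FE a 0 B) : FE a 0 A := by
  unfold FE at *
  exact isNoetherian_of_injective (em a 0 f) (em_injective_zero a hf)

lemma FE.of_equiv {a : Ideal R} {i : ℕ} (e : A ≃ₗ[R] B) (hA : FE a i A) : FE a i B := by
  unfold FE at *
  refine isNoetherian_of_surjective (em a i e.toLinearMap) ?_
  rw [LinearMap.range_eq_top]
  intro x
  refine ⟨em a i e.symm.toLinearMap x, ?_⟩
  rw [em_comp, LinearEquiv.comp_symm, em_apply]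
  exact Ext.comp_mk₀_id x

lemma FE.of_finite [IsNoetherianRing R] (a : Ideal R) (i : ℕ) [Module.Finite R A] : FE a i A := by
  unfold FE
  have : Module.Finite R (Abelian.Ext (ModuleCat.of R (R ⧸ a)) (ModuleCat.of R A) i) :=
    ModuleCat.finite_ext R _ _ i
  exact isNoetherian_of_isNoetherianRing_of_finite R _

lemma FE.of_mul {a : Ideal R} {x : R} (hx : x ∈ a)
    (hK : ∀ i, FE a i (LinearMap.ker (LinearMap.lsmul R M x)))
    (hQ : ∀ i, FE a i (M ⧸ LinearMap.range (LinearMap.lsmul R M x))) (i : ℕ) : FE a i M := by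
  set l := LinearMap.lsmul R M x
  have e1 : Function.Exact (LinearMap.ker l).subtype l.rangeRestrict := by
    rw [LinearMap.exact_iff]; simp
  have e2 : Function.Exact (LinearMap.range l).subtype (LinearMap.range l).mkQ := by
    rw [LinearMap.exact_iff]; simp
  have hk : IsNoetherian R (LinearMap.ker (em a i (LinearMap.range l).subtype)) := by
    rcases i with _ | i
    · rw [LinearMap.ker_eq_bot.2 (em_injective_zero a (Submodule.subtype_injective _))]
      infer_instance
    · exact ker_em a (Submodule.subtype_injective _) (Submodule.mkQ_surjective _) e2 (hQ i)
  have hz : ∀ y, em a i l.rangeRestrict y ∈ LinearMap.ker (em a i (LinearMap.range l).subtype) := by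
    intro y
    rw [LinearMap.mem_ker, em_comp]
    exact em_smul i hx y
  have hK' := hK i
  unfold FE at *
  refine isNoetherian_of_range_eq_ker (em a i (LinearMap.ker l).subtype)
    ((em a i l.rangeRestrict).codRestrict _ hz) ?_
  rw [LinearMap.ker_codRestrict]
  exact em_exact a i (Submodule.subtype_injective _) l.surjective_rangeRestrict e1

/-- Hom(R/a, M) is the a-torsion -/
lemma FE.zero_iff (a : Ideal R) : FE a 0 M ↔ IsNoetherian R (Submodule.torsionBySet R M (a : Set R)) := by
  unfold FE
  let e0 : (ModuleCat.of R (R ⧸ a) ⟶ ModuleCat.of R M) ≃ₗ[R] ((R ⧸ a) →ₗ[R] M) :=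
    ModuleCat.homLinearEquiv
  let e1 : Abelian.Ext (ModuleCat.of R (R ⧸ a)) (ModuleCat.of R M) 0 ≃ₗ[R] ((R ⧸ a) →ₗ[R] M) :=
    Ext.linearEquiv₀.trans e0
  let e2 : ((R ⧸ a) →ₗ[R] M) →ₗ[R] M := LinearMap.applyₗ (1 : R ⧸ a)
  have hinj : Function.Injective e2 := by
    intro f g h
    ext
    exact h
  have hr : LinearMap.range e2 = Submodule.torsionBySet R M (a : Set R) := by
    ext m
    rw [Submodule.mem_torsionBySet_iff]
    constructor
    · rintro ⟨f, rfl⟩ ⟨r, hr⟩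
      change r • f 1 = 0
      rw [← map_smul]
      have : r • (1 : R ⧸ a) = 0 := by
        rw [Algebra.smul_def, mul_one]
        exact Ideal.Quotient.eq_zero_iff_mem.2 hr
      rw [this, map_zero]
    · intro h
      refine ⟨Submodule.liftQ a (LinearMap.toSpanSingleton R M m) ?_, ?_⟩
      · intro r hr
        exact h ⟨r, hr⟩
      · change (LinearMap.toSpanSingleton R M m) 1 = m
        simp
  have e3 := e1.trans ((LinearEquiv.ofInjective e2 hinj).trans (LinearEquiv.ofEq _ _ hr))
  exact ⟨fun h => isNoetherian_of_linearEquiv e3, fun h => isNoetherian_of_linearEquiv e3.symm⟩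

end
end Cof

namespace Cof

section
variable {A N : Type u} [CommRing A] [AddCommGroup N] [Module A N]

lemma artinian_of_ker (x : A) (hx : ∀ n : N, ∃ k : ℕ, x ^ k • n = 0)
    (hK : IsArtinian A (LinearMap.ker (LinearMap.lsmul A N x))) : IsArtinian A N := by
  rw [← monotone_stabilizes_iff_artinian] at hK ⊢
  intro f
  set K := LinearMap.ker (LinearMap.lsmul A N x) with hKd
  let F : ℕ → Submodule A N := fun n => OrderDual.ofDual (f n)
  have hF : ∀ i j, i ≤ j → F j ≤ F i := fun i j h => f.monotone h
  let T : ℕ → ℕ → Submodule A K := fun j k =>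
    Submodule.comap K.subtype (Submodule.map (LinearMap.lsmul A N (x ^ k)) (F j))
  have memT : ∀ j k (z : K), z ∈ T j k ↔ ∃ l ∈ F j, x ^ k • l = z := fun j k z => by
    simp [T]
  have hT1 : ∀ i j k, i ≤ j → T j k ≤ T i k := by
    intro i j k h z hz
    rw [memT] at hz ⊢
    obtain ⟨l, hl, e⟩ := hz
    exact ⟨l, hF i j h hl, e⟩
  have hT2 : ∀ j k k', k ≤ k' → T j k' ≤ T j k := by
    intro j k k' h z hz
    rw [memT] at hz ⊢
    obtain ⟨l, hl, e⟩ := hz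
    refine ⟨x ^ (k' - k) • l, Submodule.smul_mem _ _ hl, ?_⟩
    rw [smul_smul, ← pow_add, Nat.add_sub_cancel' h, e]
  obtain ⟨j0, hj0⟩ := hK ⟨fun j => OrderDual.toDual (T j j), fun i j h =>
    (show T j j ≤ T i i from (hT1 i j j h).trans (hT2 i i j h))⟩
  have hj0' : ∀ m, j0 ≤ m → T j0 j0 = T m m := hj0
  have hst : ∀ k, ∃ n, ∀ m, n ≤ m → T n k = T m k := fun k =>
    hK ⟨fun j => OrderDual.toDual (T j k), fun i j h => (show T j k ≤ T i k from hT1 i j k h)⟩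
  choose ν hν using hst
  let n := max j0 ((Finset.range j0).sup ν)
  refine ⟨n, fun m hm => ?_⟩
  have key : ∀ k, T n k ≤ T m k := by
    intro k
    by_cases hk : k < j0
    · have h1 : ν k ≤ n := le_max_of_le_right (Finset.le_sup (f := ν) (Finset.mem_range.2 hk))
      rw [← hν k n h1, ← hν k m (h1.trans hm)]
    · push Not at hk
      have h0 : j0 ≤ n := le_max_left _ _
      calc T n k ≤ T j0 j0 := (hT1 j0 n k h0).trans (hT2 j0 j0 k hk)
        _ = T (max m k) (max m k) := hj0' _ (hk.trans (le_max_right _ _))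
        _ ≤ T m (max m k) := hT1 _ _ _ (le_max_left _ _)
        _ ≤ T m k := hT2 _ _ _ (le_max_right _ _)
  have key2 : ∀ k, ∀ l ∈ F n, x ^ k • l = 0 → l ∈ F m := by
    intro k
    induction k with
    | zero => intro l _ h; simp at h; rw [h]; exact zero_mem _
    | succ k ih =>
      intro l hl h
      have hz : x ^ k • l ∈ K := by
        rw [hKd, LinearMap.mem_ker, LinearMap.lsmul_apply, smul_smul, ← pow_succ', h]
      obtain ⟨l', hl', e⟩ := (memT m k ⟨_, hz⟩).1 (key k ((memT n k ⟨_, hz⟩).2 ⟨l, hl, rfl⟩))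
      have := ih (l - l') (sub_mem hl (hF n m hm hl')) (by rw [smul_sub, e]; simp)
      simpa using add_mem this hl'
  have : F n = F m := le_antisymm (fun l hl => by
    obtain ⟨k, hk⟩ := hx l
    exact key2 k l hl hk) (hF n m hm)
  exact this

lemma artinian_of_torsion (s : Finset A) : ∀ (N : Type u) [AddCommGroup N] [Module A N],
    (∀ x ∈ s, ∀ n : N, ∃ k : ℕ, x ^ k • n = 0) →
    IsArtinian A (Submodule.torsionBySet A N (s : Set A)) → IsArtinian A N := by
  classical
  induction s using Finset.induction_on with
  | empty =>
    intro N _ _ _ h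
    let e : N →ₗ[A] Submodule.torsionBySet A N ((∅ : Finset A) : Set A) :=
      LinearMap.codRestrict _ LinearMap.id (by simp [Submodule.mem_torsionBySet_iff])
    exact isArtinian_of_injective e (fun x y h => congrArg Subtype.val h)
  | insert x s _ ih =>
    intro N _ _ hx h
    refine artinian_of_ker x (hx x (by simp)) (ih _ ?_ ?_)
    · intro y hy n
      obtain ⟨k, hk⟩ := hx y (by simp [hy]) n
      exact ⟨k, Subtype.ext hk⟩
    · let K := LinearMap.ker (LinearMap.lsmul A N x)
      let e : Submodule.torsionBySet A K (s : Set A) →ₗ[A]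
          Submodule.torsionBySet A N ((insert x s : Finset A) : Set A) :=
        LinearMap.codRestrict _ (K.subtype ∘ₗ Submodule.subtype _) (by
          rintro ⟨⟨c, hc⟩, hc'⟩
          rw [Submodule.mem_torsionBySet_iff] at hc' ⊢
          rintro ⟨y, hy⟩
          simp only [Finset.coe_insert, Set.mem_insert_iff, Finset.mem_coe] at hy
          rcases hy with rfl | hy
          · exact hc
          · exact congrArg Subtype.val (hc' ⟨y, hy⟩))
      exact isArtinian_of_injective e
        (fun x y h => by
          have h' := congrArg Subtype.val h
          exact Subtype.ext (Subtype.ext h'))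
end

section
variable {R M : Type u} [CommRing R] [AddCommGroup M] [Module R M]

lemma uniformize {a : Ideal R} (ha : a.FG) {p : Ideal R} [p.IsPrime] (N : Submodule R M) (m : M)
    (h : ∀ x ∈ a, ∃ u ∉ p, u • x • m ∈ N) : ∃ u ∉ p, ∀ x ∈ a, u • x • m ∈ N := by
  classical
  obtain ⟨s, rfl⟩ := ha
  have : ∀ t : Finset R, t ⊆ s → ∃ u ∉ p, ∀ x ∈ t, u • x • m ∈ N := by
    intro t
    induction t using Finset.induction_on with
    | empty => intro _; exact ⟨1, (Ideal.ne_top_iff_one _).1 (Ideal.IsPrime.ne_top inferInstance), by simp⟩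
    | insert y t _ ih =>
      intro ht
      obtain ⟨u, hu, hu'⟩ := ih ((Finset.subset_insert _ _).trans ht)
      obtain ⟨v, hv, hv'⟩ := h y (Ideal.subset_span (ht (Finset.mem_insert_self _ _)))
      refine ⟨u * v, fun hh => ((Ideal.IsPrime.mem_or_mem inferInstance hh).elim hu hv), ?_⟩
      intro x hx
      rw [Finset.mem_insert] at hx
      rcases hx with rfl | hx
      · rw [mul_smul]; exact N.smul_mem _ hv'
      · rw [mul_comm, mul_smul]; exact N.smul_mem _ (hu' x hx)
  obtain ⟨u, hu, hu'⟩ := this s subset_rfl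
  refine ⟨u, hu, fun x hx => ?_⟩
  induction hx using Submodule.span_induction with
  | mem x hx => exact hu' x hx
  | zero => simp
  | add x y _ _ h1 h2 => rw [add_smul, smul_add]; exact add_mem h1 h2
  | smul r x _ h1 => rw [smul_assoc, smul_comm]; exact N.smul_mem _ h1

lemma torsion_of_supp [IsNoetherianRing R] {a : Ideal R}
    (hs : Module.support R M ⊆ PrimeSpectrum.zeroLocus (a : Set R)) (m : M) :
    ∃ k : ℕ, ∀ x ∈ a ^ k, x • m = 0 := by
  have hfg : a.FG := IsNoetherian.noetherian a
  have : a ≤ Ideal.radical (LinearMap.ker (LinearMap.toSpanSingleton R M m) : Ideal R) := by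
    rw [Ideal.radical_eq_sInf]
    refine le_sInf ?_
    rintro p ⟨hp, hpp⟩
    have : (⟨p, hpp⟩ : PrimeSpectrum R) ∈ Module.support R M := by
      rw [Module.mem_support_iff']
      refine ⟨m, fun r hr h => hr (hp ?_)⟩
      simpa using h
    exact hs this
  obtain ⟨k, hk⟩ := Ideal.exists_pow_le_of_le_radical_of_fg this hfg
  exact ⟨k, fun x hx => by simpa using hk hx⟩

lemma mem_supp_torsion [IsNoetherianRing R] {a : Ideal R}
    (hs : Module.support R M ⊆ PrimeSpectrum.zeroLocus (a : Set R)) {p : PrimeSpectrum R}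
    (hp : p ∈ Module.support R M) :
    p ∈ Module.support R (Submodule.torsionBySet R M (a : Set R)) := by
  by_contra hF
  rw [Module.notMem_support_iff'] at hF
  have claim : ∀ k : ℕ, ∀ m : M, (∀ x ∈ a ^ k, x • m = 0) → ∃ u ∉ p.asIdeal, u • m = 0 := by
    intro k
    induction k with
    | zero =>
      intro m hm
      exact ⟨1, (Ideal.ne_top_iff_one _).1 p.2.ne_top, hm 1 (by simp)⟩
    | succ k ih =>
      intro m hm
      obtain ⟨u, hu, hu'⟩ := uniformize (IsNoetherian.noetherian a) (p := p.asIdeal) ⊥ m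
        (fun x hx => by
          obtain ⟨u, hu, h⟩ := ih (x • m) (fun y hy => by
            rw [smul_smul]; exact hm _ (by rw [pow_succ]; exact Ideal.mul_mem_mul hy hx))
          exact ⟨u, hu, by simpa using h⟩)
      have hum : u • m ∈ Submodule.torsionBySet R M (a : Set R) := by
        rw [Submodule.mem_torsionBySet_iff]
        rintro ⟨x, hx⟩
        have := hu' x hx
        rw [Submodule.mem_bot, smul_comm] at this
        exact this
      obtain ⟨v, hv, h⟩ := hF ⟨_, hum⟩
      refine ⟨v * u, fun hh => (p.2.mem_or_mem hh).elim hv hu, ?_⟩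
      rw [mul_smul]; exact congrArg Subtype.val h
  rw [Module.mem_support_iff'] at hp
  obtain ⟨m, hm⟩ := hp
  obtain ⟨k, hk⟩ := torsion_of_supp hs m
  obtain ⟨u, hu, h⟩ := claim k m hk
  exact hm u hu h

lemma finite_min [IsNoetherianRing R] {a : Ideal R}
    (hs : Module.support R M ⊆ PrimeSpectrum.zeroLocus (a : Set R))
    (hF : Module.Finite R (Submodule.torsionBySet R M (a : Set R))) :
    {p : PrimeSpectrum R | p ∈ Module.support R M ∧
      ∀ q ∈ Module.support R M, q ≤ p → q = p}.Finite := by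
  set F := Submodule.torsionBySet R M (a : Set R)
  refine Set.Finite.of_finite_image (f := PrimeSpectrum.asIdeal)
    ((Ideal.finite_minimalPrimes_of_isNoetherianRing R (Module.annihilator R F)).subset ?_)
    (fun p _ q _ h => PrimeSpectrum.ext h)
  rintro _ ⟨p, ⟨hp, hmin⟩, rfl⟩
  refine ⟨⟨p.2, Module.annihilator_le_of_mem_support (mem_supp_torsion hs hp)⟩, ?_⟩
  rintro q ⟨hq, hq'⟩ hqp
  have : (⟨q, hq⟩ : PrimeSpectrum R) ∈ Module.support R F := by
    rw [Module.support_eq_zeroLocus]; exact hq'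
  have := hmin _ (Module.support_subset_of_injective F.subtype F.subtype_injective this) hqp
  rw [← this]

end
end Cof

namespace Cof

lemma artinian_of_max {A N : Type u} [CommRing A] [AddCommGroup N] [Module A N] (m : Ideal A)
    [m.IsMaximal] (hfg : Module.Finite A N) (hm : Module.IsTorsionBySet A N (m : Set A)) :
    IsArtinian A N := by
  let := hm.module
  have : IsScalarTower A (A ⧸ m) N := hm.isScalarTower
  have : Module.Finite (A ⧸ m) N := Module.Finite.of_restrictScalars_finite A (A ⧸ m) N
  let := Ideal.Quotient.field m
  have : IsArtinian (A ⧸ m) N := inferInstance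
  exact isArtinian_of_surjective_algebraMap (R := A ⧸ m) (S := A) Ideal.Quotient.mk_surjective

section
variable {R M : Type u} [CommRing R] [AddCommGroup M] [Module R M]

lemma loc_nilp {p : PrimeSpectrum R} (hmin : ∀ q ∈ Module.support R M, q ≤ p → q = p)
    {x : R} (hx : x ∈ p.asIdeal) (m : M) : ∃ k : ℕ, ∃ u ∉ p.asIdeal, u • x ^ k • m = 0 := by
  let I : Ideal R := LinearMap.ker (LinearMap.toSpanSingleton R M m)
  have hI : ∀ r, r ∈ I ↔ r • m = 0 := fun r => by simp [I]
  by_contra hc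
  push Not at hc
  obtain ⟨q, hq, hIq, hd⟩ := Ideal.exists_le_prime_disjoint I
    (Submonoid.powers x ⊔ p.asIdeal.primeCompl) (by
      rw [Set.disjoint_left]
      intro r hr hr'
      obtain ⟨y, ⟨k, rfl⟩, u, hu, rfl⟩ := Submonoid.mem_sup.1 hr'
      rw [SetLike.mem_coe, hI, mul_comm, mul_smul] at hr
      exact hc k u hu hr)
  have h1 : (⟨q, hq⟩ : PrimeSpectrum R) ∈ Module.support R M := by
    rw [Module.mem_support_iff']
    exact ⟨m, fun r hr h => hr (hIq ((hI r).2 h))⟩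
  have h2 := hmin _ h1 (fun r hr => by
    by_contra hrp
    exact Set.disjoint_left.1 hd hr (Submonoid.mem_sup_right (show r ∈ p.asIdeal.primeCompl from hrp)))
  have : x ∈ q := by
    have := congrArg PrimeSpectrum.asIdeal h2
    simp only at this
    rw [this]; exact hx
  exact Set.disjoint_left.1 hd this (Submonoid.mem_sup_left (Submonoid.mem_powers x))

lemma artinian_loc [IsNoetherianRing R] {a : Ideal R}
    (hF : Module.Finite R (Submodule.torsionBySet R M (a : Set R)))
    {p : PrimeSpectrum R} (hap : a ≤ p.asIdeal)
    (hmin : ∀ q ∈ Module.support R M, q ≤ p → q = p) :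
    IsArtinian (Localization.AtPrime p.asIdeal) (LocalizedModule p.asIdeal.primeCompl M) := by
  classical
  obtain ⟨s, hs⟩ : p.asIdeal.FG := IsNoetherian.noetherian _
  have hsp : ∀ y ∈ s, y ∈ p.asIdeal := fun y hy => by
    rw [← hs]; exact Ideal.subset_span hy
  set A := Localization.AtPrime p.asIdeal
  set N := LocalizedModule p.asIdeal.primeCompl M
  have hsm : Ideal.span ((s.image (algebraMap R A) : Finset A) : Set A) =
      IsLocalRing.maximalIdeal A := by
    have h1 : Ideal.map (algebraMap R A) (Ideal.span (s : Set R)) =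
        Ideal.map (algebraMap R A) p.asIdeal := congrArg _ hs
    rw [← Localization.AtPrime.map_eq_maximalIdeal, ← h1, Ideal.map_span, Finset.coe_image]
  refine artinian_of_torsion (s.image (algebraMap R A)) N ?_ ?_
  · intro y hy n
    rw [Finset.mem_image] at hy
    obtain ⟨x, hx, rfl⟩ := hy
    induction n using LocalizedModule.induction_on with
    | _ m t =>
    obtain ⟨k, u, hu, h⟩ := loc_nilp hmin (hsp x hx) m
    refine ⟨k, ?_⟩
    rw [← map_pow, algebraMap_smul, LocalizedModule.smul'_mk, IsLocalizedModule.mk_eq_mk', IsLocalizedModule.mk'_eq_zero']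
    exact ⟨⟨u, hu⟩, h⟩
  · set T := Submodule.torsionBySet A N ((s.image (algebraMap R A) : Finset A) : Set A)
    have hT : ∀ n ∈ T, ∀ c ∈ IsLocalRing.maximalIdeal A, c • n = 0 := by
      intro n hn c hc
      rw [← hsm] at hc
      have hn' : n ∈ Submodule.torsionBySet A N
        ((Ideal.span ((s.image (algebraMap R A) : Finset A) : Set A) : Ideal A) : Set A) := by
        rw [← Submodule.torsionBySet_eq_torsionBySet_span]; exact hn
      rw [Submodule.mem_torsionBySet_iff] at hn'
      exact hn' ⟨c, hc⟩
    set F := Submodule.torsionBySet R M (a : Set R)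
    have hTF : T ≤ F.localized p.asIdeal.primeCompl := by
      intro n hn
      have hn' := hT n hn
      clear hn
      induction n using LocalizedModule.induction_on with
      | _ m t =>
      obtain ⟨u, hu, hu'⟩ := uniformize (IsNoetherian.noetherian a) (p := p.asIdeal) ⊥ m
        (fun x hx => by
          have h := hn' (algebraMap R A x) (by
            rw [← Localization.AtPrime.map_eq_maximalIdeal]
            exact Ideal.mem_map_of_mem _ (hap hx))
          rw [algebraMap_smul, LocalizedModule.smul'_mk, IsLocalizedModule.mk_eq_mk', IsLocalizedModule.mk'_eq_zero'] at h
          obtain ⟨⟨v, hv⟩, h⟩ := h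
          exact ⟨v, hv, by simpa using h⟩)
      rw [Submodule.mem_localized']
      refine ⟨u • m, ?_, ⟨u, hu⟩ * t, ?_⟩
      · rw [Submodule.mem_torsionBySet_iff]
        rintro ⟨x, hx⟩
        have := hu' x hx
        rw [Submodule.mem_bot, smul_comm] at this
        exact this
      · rw [← IsLocalizedModule.mk_eq_mk', LocalizedModule.mk_eq]
        refine ⟨1, ?_⟩
        simp only [Submonoid.smul_def, Submonoid.coe_mul, one_smul, smul_smul]
        rw [mul_comm]
    have : Module.Finite A (LocalizedModule p.asIdeal.primeCompl F) := inferInstance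
    have : Module.Finite A (F.localized p.asIdeal.primeCompl) :=
      Module.Finite.equiv (F.localizedEquiv p.asIdeal.primeCompl).symm
    have : IsNoetherianRing A := IsLocalization.isNoetherianRing p.asIdeal.primeCompl _ inferInstance
    have : IsNoetherian A (F.localized p.asIdeal.primeCompl) := inferInstance
    have : IsNoetherian A T := isNoetherian_of_le hTF
    refine artinian_of_max (IsLocalRing.maximalIdeal A) inferInstance ?_
    rintro ⟨n, hn⟩ ⟨c, hc⟩
    exact Subtype.ext (hT n hn c hc)

lemma exists_measure [IsNoetherianRing R] {a : Ideal R}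
    (hs : Module.support R M ⊆ PrimeSpectrum.zeroLocus (a : Set R))
    (hF : Module.Finite R (Submodule.torsionBySet R M (a : Set R)))
    (W : Set (PrimeSpectrum R))
    (hW : ∀ p ∈ W, p ∈ Module.support R M → ∀ q ∈ Module.support R M, q ≤ p → q = p) :
    ∃ (α : Type u) (_ : PartialOrder α) (_ : WellFoundedLT α) (Φ : Submodule R M → α),
      Monotone Φ ∧ ∀ N' N, N' ≤ N → Φ N' = Φ N → ∀ p ∈ W, ∀ n ∈ N,
        ∃ s ∉ p.asIdeal, s • n ∈ N' := by
  let W' : Set (PrimeSpectrum R) := W ∩ Module.support R M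
  have hfin : W'.Finite := (finite_min hs hF).subset (fun p hp => ⟨hp.2, hW p hp.1 hp.2⟩)
  have : Finite W' := hfin
  let α := ∀ p : W', Submodule (Localization p.1.asIdeal.primeCompl)
    (LocalizedModule p.1.asIdeal.primeCompl M)
  have : ∀ p : W', WellFoundedLT (Submodule (Localization p.1.asIdeal.primeCompl)
    (LocalizedModule p.1.asIdeal.primeCompl M)) := fun p =>
      artinian_loc hF (hs p.2.2) (hW p.1 p.2.1 p.2.2)
  refine ⟨α, inferInstance, inferInstance, fun N p => N.localized p.1.asIdeal.primeCompl, ?_, ?_⟩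
  · intro N N' h p
    exact (Submodule.localized'gi _ _ _).gc.monotone_l h
  · intro N' N hle h p hp n hn
    by_cases hps : p ∈ Module.support R M
    · have h1 := congrFun h ⟨p, hp, hps⟩
      have h2 : LocalizedModule.mk n (1 : p.asIdeal.primeCompl) ∈
          N'.localized p.asIdeal.primeCompl := by
        have : N'.localized p.asIdeal.primeCompl = N.localized p.asIdeal.primeCompl := h1
        rw [this, Submodule.mem_localized']
        exact ⟨n, hn, 1, by rw [← IsLocalizedModule.mk_eq_mk']⟩
      rw [Submodule.mem_localized'] at h2
      obtain ⟨m, hm, s, e⟩ := h2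
      rw [← IsLocalizedModule.mk_eq_mk', LocalizedModule.mk_eq] at e
      obtain ⟨u, e⟩ := e
      refine ⟨(u * s : p.asIdeal.primeCompl), (u * s).2, ?_⟩
      have e' : (u * s : p.asIdeal.primeCompl) • n = u • m := by
        rw [mul_smul, ← e, one_smul]
      rw [← Submonoid.smul_def, e']
      exact N'.smul_mem _ hm
    · rw [Module.notMem_support_iff'] at hps
      obtain ⟨s, hs, e⟩ := hps n
      exact ⟨s, hs, by rw [e]; exact zero_mem _⟩
end
end Cof

namespace Cof

section
variable {R : Type u} [CommRing R]

lemma level_aux [IsNoetherianRing R] {a : Ideal R} (n : ℕ) (hn1 : 1 ≤ n) (hn2 : n ≤ 2)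
    (M : Type u) [AddCommGroup M] [Module R M]
    (hs : Module.support R M ⊆ PrimeSpectrum.zeroLocus (a : Set R))
    (W : Set (PrimeSpectrum R))
    (hW : ∀ p ∈ W, p ∈ Module.support R M → ∀ q ∈ Module.support R M, q ≤ p → q = p)
    (IHQ : ∀ (Q : Type u) [AddCommGroup Q] [Module R Q],
      Module.support R Q ⊆ Module.support R M → (∀ p ∈ W, p ∉ Module.support R Q) →
      (∀ i, i + 1 < n → FE a i Q) → ∀ i, FE a i Q)
    (hM : ∀ i < n, FE a i M) : ∀ i, FE a i M := by
  have hF : Module.Finite R (Submodule.torsionBySet R M (a : Set R)) := by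
    have := (FE.zero_iff a).1 (hM 0 hn1)
    infer_instance
  obtain ⟨α, _, _, Φ, hΦ, hsat⟩ := exists_measure hs hF W hW
  have main : ∀ c : α, ∀ N : Submodule R M, Φ N = c → (∀ i < n, FE a i N) → ∀ i, FE a i N := by
    intro c
    induction c using WellFoundedLT.induction with
    | ind c ih =>
    rintro N rfl hN
    have e : ∀ J : Submodule R N, J ≃ₗ[R] (J.map N.subtype) := fun J =>
      Submodule.equivMapOfInjective N.subtype N.subtype_injective J
    have hle : ∀ J : Submodule R N, J.map N.subtype ≤ N := fun J => Submodule.map_subtype_le _ _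
    have ih' : ∀ J : Submodule R N, Φ (J.map N.subtype) ≠ Φ N → (∀ i < n, FE a i J) →
        ∀ i, FE a i J := by
      intro J hJ hJ' i
      refine FE.of_equiv (e J).symm (ih _ (lt_of_le_of_ne (hΦ (hle J)) hJ) _ rfl ?_ i)
      exact fun i hi => FE.of_equiv (e J) (hJ' i hi)
    have hsN : ∀ J : Submodule R N, Module.support R (N ⧸ J) ⊆ Module.support R M := fun J =>
      (Module.support_subset_of_surjective J.mkQ J.mkQ_surjective).trans
        (Module.support_subset_of_injective N.subtype N.subtype_injective)
    have hoff : ∀ J : Submodule R N, (∀ p ∈ W, ∀ x : N, ∃ s ∉ p.asIdeal, s • x ∈ J) →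
        ∀ p ∈ W, p ∉ Module.support R (N ⧸ J) := by
      intro J hJ p hp
      rw [Module.notMem_support_iff']
      intro q
      obtain ⟨x, rfl⟩ := J.mkQ_surjective q
      obtain ⟨s, hs, h⟩ := hJ p hp x
      refine ⟨s, hs, ?_⟩
      rw [← map_smul, Submodule.mkQ_apply, Submodule.Quotient.mk_eq_zero]
      exact h
    have hex : ∀ J : Submodule R N, Function.Exact J.subtype J.mkQ := fun J => by
      rw [LinearMap.exact_iff]; simp
    have hsat' : ∀ J : Submodule R N, Φ (J.map N.subtype) = Φ N →
        ∀ p ∈ W, ∀ x : N, ∃ s ∉ p.asIdeal, s • x ∈ J := by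
      intro J hJ p hp x
      obtain ⟨s, hs, y, hy, hyx⟩ := hsat _ _ (hle J) hJ p hp x x.2
      refine ⟨s, hs, ?_⟩
      have : y = s • x := Subtype.ext hyx
      rw [← this]; exact hy
    by_cases hcase : ∃ x ∈ a, Φ ((LinearMap.ker (LinearMap.lsmul R N x)).map N.subtype) ≠ Φ N
    · obtain ⟨x, hx, hK⟩ := hcase
      set l := LinearMap.lsmul R N x with hl
      have hexl : Function.Exact (LinearMap.ker l).subtype l.rangeRestrict := by
        rw [LinearMap.exact_iff]; simp
      have hsur : Function.Surjective l.rangeRestrict := l.surjective_rangeRestrict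
      have hK0 : ∀ i < n, FE a i (LinearMap.ker l) := by
        intro i hi
        rcases i with _ | i
        · exact FE.left_zero (Submodule.subtype_injective _) (hN 0 hi)
        · have : i = 0 := by omega
          subst this
          exact FE.left (Submodule.subtype_injective _) hsur hexl
            (FE.left_zero (Submodule.subtype_injective _) (hN 0 (by omega))) (hN 1 hi)
      have hKall := ih' _ hK hK0
      have hI : ∀ i < n, FE a i (LinearMap.range l) := fun i hi =>
        FE.right (Submodule.subtype_injective _) hsur hexl (hN i hi) (hKall (i + 1))
      by_cases hI' : Φ ((LinearMap.range l).map N.subtype) = Φ N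
      · refine FE.of_mul hx hKall (IHQ _ (hsN _) (hoff _ (hsat' _ hI')) ?_)
        intro i hi
        exact FE.right (Submodule.subtype_injective _) (Submodule.mkQ_surjective _) (hex _)
          (hN i (by omega)) (hI (i + 1) hi)
      · exact fun i => FE.mid (Submodule.subtype_injective _) hsur hexl (hKall i) (ih' _ hI' hI i)
    · push Not at hcase
      have hfin : Module.Finite R (Submodule.torsionBySet R N (a : Set R)) := by
        have := (FE.zero_iff a).1 (hN 0 hn1)
        infer_instance
      refine fun i => FE.mid (Submodule.subtype_injective _) (Submodule.mkQ_surjective _)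
        (hex (Submodule.torsionBySet R N (a : Set R))) (FE.of_finite a i) ?_
      refine IHQ _ (hsN _) (hoff _ ?_) ?_ i
      · intro p hp y
        obtain ⟨u, hu, hu'⟩ := uniformize (IsNoetherian.noetherian a) (p := p.asIdeal) ⊥ y
          (fun x hx => by
            obtain ⟨s, hs, h⟩ := hsat' _ (hcase x hx) p hp y
            refine ⟨s, hs, ?_⟩
            rw [LinearMap.mem_ker, LinearMap.lsmul_apply, smul_comm] at h
            exact h)
        refine ⟨u, hu, ?_⟩
        rw [Submodule.mem_torsionBySet_iff]
        rintro ⟨x, hx⟩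
        have := hu' x hx
        rw [Submodule.mem_bot, smul_comm] at this
        exact this
      · intro i hi
        exact FE.right (Submodule.subtype_injective _) (Submodule.mkQ_surjective _) (hex _)
          (hN i (by omega)) (FE.of_finite a (i + 1))
  intro i
  refine FE.of_equiv Submodule.topEquiv (main _ ⊤ rfl ?_ i)
  exact fun i hi => FE.of_equiv Submodule.topEquiv.symm (hM i hi)

lemma level_one [IsNoetherianRing R] {a : Ideal R}
    (M : Type u) [AddCommGroup M] [Module R M]
    (hs : Module.support R M ⊆ PrimeSpectrum.zeroLocus (a : Set R))
    (hmax : ∀ p ∈ Module.support R M, p.asIdeal.IsMaximal)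
    (hM : FE a 0 M) : ∀ i, FE a i M := by
  refine level_aux 1 le_rfl (by omega) M hs Set.univ ?_ ?_ ?_
  · intro p _ _ q hq hqp
    exact PrimeSpectrum.ext ((hmax q hq).eq_of_le p.2.ne_top hqp)
  · intro Q _ _ _ h _ i
    have : Subsingleton Q := by
      rw [← Module.support_eq_empty_iff (R := R)]
      exact Set.eq_empty_of_forall_notMem (fun p => h p trivial)
    exact FE.of_finite a i
  · intro i hi
    obtain rfl : i = 0 := by omega
    exact hM

lemma level_two [IsNoetherianRing R] {a : Ideal R}
    (M : Type u) [AddCommGroup M] [Module R M]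
    (hs : Module.support R M ⊆ PrimeSpectrum.zeroLocus (a : Set R))
    (hdim : ∀ r ∈ Module.support R M, ∀ q ∈ Module.support R M, r < q → q.asIdeal.IsMaximal)
    (hM : FE a 0 M) (hM1 : FE a 1 M) : ∀ i, FE a i M := by
  refine level_aux 2 (by omega) le_rfl M hs {p | ¬ p.asIdeal.IsMaximal} ?_ ?_ ?_
  · intro p hp hpM q hq hqp
    by_contra hne
    exact hp (hdim q hq p hpM (lt_of_le_of_ne hqp hne))
  · intro Q _ _ hQs hQ hQ0
    refine level_one Q (hQs.trans hs) (fun p hp => ?_) (hQ0 0 (by omega))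
    by_contra h
    exact hQ p h hp
  · intro i hi
    obtain rfl | rfl : i = 0 ∨ i = 1 := by omega
    · exact hM
    · exact hM1

end
end Cof

namespace Cof

section
variable {R M : Type u} [CommRing R] [IsNoetherianRing R] [AddCommGroup M] [Module R M]

lemma ar_step {N L : Submodule R M} (hN : N.FG) {b : Ideal R} (hb : b • N ≤ L)
    {p : Ideal R} [hp : p.IsPrime] (hbp : ¬ b ≤ p) {y : M} (hy : ∀ r : R, r • y ∈ N → r ∈ p) :
    ∃ z : M, (∀ r : R, r • z ∈ N → r • z ∈ L) ∧ (∀ r : R, r • z ∈ N → r ∈ p) := by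
  let P : Submodule R M := N ⊔ Submodule.span R {y}
  have hP : Module.Finite R P :=
    Module.Finite.iff_fg.2 (hN.sup (Submodule.fg_span_singleton y))
  let N' : Submodule R P := N.comap P.subtype
  obtain ⟨k, hk⟩ := b.exists_pow_inf_eq_pow_smul N'
  have h1 := hk (k + 1) (by omega)
  rw [Nat.add_sub_cancel_left, pow_one] at h1
  have hyP : y ∈ P := Submodule.mem_sup_right (Submodule.mem_span_singleton_self y)
  have hbk : ¬ b ^ (k + 1) ≤ p := fun h => hbp (hp.le_of_pow_le h)
  obtain ⟨s, hs, hsp⟩ := SetLike.not_le_iff_exists.1 hbk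
  refine ⟨s • y, fun r hr => ?_, fun r hr => ?_⟩
  · have h2 : (⟨r • s • y, P.smul_mem _ (P.smul_mem _ hyP)⟩ : P) ∈
        b ^ (k + 1) • (⊤ : Submodule R P) ⊓ N' := by
      refine ⟨?_, hr⟩
      exact Submodule.smul_mem _ r (Submodule.smul_mem_smul hs
        (Submodule.mem_top (x := (⟨y, hyP⟩ : P))))
    rw [h1] at h2
    have h3 : b • (b ^ k • (⊤ : Submodule R P) ⊓ N') ≤ L.comap P.subtype := by
      rw [Submodule.smul_le]
      rintro c hc ⟨n, hn⟩ hn'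
      exact hb (Submodule.smul_mem_smul hc hn'.2)
    exact h3 h2
  · rw [smul_smul] at hr
    exact (hp.mem_or_mem (hy _ hr)).resolve_right hsp

/-- State in the recursive construction. -/
structure St (R M : Type u) [CommRing R] [AddCommGroup M] [Module R M]
    (T : Set (PrimeSpectrum R)) where
  N : Submodule R M
  L : Submodule R M
  b : Ideal R
  S : Finset (PrimeSpectrum R)
  hN : N.FG
  hL : L ≤ N
  hb : b • N ≤ L
  hS : ∀ p : PrimeSpectrum R, b ≤ p.asIdeal → ∃ q ∈ S, q ≤ p
  hT : (S : Set (PrimeSpectrum R)) ⊆ T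

lemma st_step {T : Set (PrimeSpectrum R)} (σ : St R M T)
    (h : ∃ p ∈ T, p ∈ Module.support R (M ⧸ σ.N) ∧ ∀ q ∈ σ.S, ¬ q ≤ p) :
    ∃ τ : St R M T, σ.N ≤ τ.N ∧ σ.L ≤ τ.L ∧ τ.L ⊓ σ.N ≤ σ.L ∧ σ.S ⊆ τ.S ∧
      ∃ p : PrimeSpectrum R, p ∈ τ.S ∧ p ∉ σ.S ∧ ∃ z ∈ τ.N, ∀ r : R, r • z ∈ τ.L ↔ r ∈ p.asIdeal := by
  classical
  obtain ⟨p, hpT, hp, hq⟩ := h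
  rw [Module.mem_support_iff'] at hp
  obtain ⟨y, hy⟩ := hp
  obtain ⟨y, rfl⟩ := Submodule.mkQ_surjective _ y
  have hy' : ∀ r : R, r • y ∈ σ.N → r ∈ p.asIdeal := by
    intro r hr
    by_contra hrp
    refine hy r hrp ?_
    rw [← map_smul, Submodule.mkQ_apply, Submodule.Quotient.mk_eq_zero]
    exact hr
  have hbp : ¬ σ.b ≤ p.asIdeal := fun hle => by
    obtain ⟨q, hqS, hqp⟩ := σ.hS p hle
    exact hq q hqS hqp
  obtain ⟨z, hz1, hz2⟩ := ar_step σ.hN σ.hb (p := p.asIdeal) hbp hy'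
  have hmem : ∀ w, w ∈ σ.L ⊔ p.asIdeal • Submodule.span R {z} ↔
      ∃ l ∈ σ.L, ∃ c ∈ p.asIdeal, w = l + c • z := by
    intro w
    rw [Submodule.mem_sup]
    constructor
    · rintro ⟨l, hl, v, hv, rfl⟩
      rw [Submodule.mem_smul_span_singleton] at hv
      obtain ⟨c, hc, rfl⟩ := hv
      exact ⟨l, hl, c, hc, rfl⟩
    · rintro ⟨l, hl, c, hc, rfl⟩
      exact ⟨l, hl, c • z, Submodule.mem_smul_span_singleton.2 ⟨c, hc, rfl⟩, rfl⟩
  refine ⟨{ N := σ.N ⊔ Submodule.span R {z}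
            L := σ.L ⊔ p.asIdeal • Submodule.span R {z}
            b := σ.b * p.asIdeal
            S := insert p σ.S
            hN := σ.hN.sup (Submodule.fg_span_singleton z)
            hL := sup_le_sup σ.hL Submodule.smul_le_right
            hb := ?_
            hS := ?_
            hT := ?_ }, le_sup_left, le_sup_left, ?_, Finset.subset_insert _ _, p,
            Finset.mem_insert_self _ _, fun hp => hq p hp le_rfl, z,
            Submodule.mem_sup_right (Submodule.mem_span_singleton_self z), ?_⟩
  · rw [Submodule.smul_sup]
    refine sup_le_sup ?_ ?_
    · exact (Submodule.smul_mono_left Ideal.mul_le_left).trans σ.hb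
    · exact Submodule.smul_mono_left Ideal.mul_le_right
  · intro q hbq
    rcases (q.2.mul_le).1 hbq with h | h
    · obtain ⟨q', hq', hle⟩ := σ.hS q h
      exact ⟨q', Finset.mem_insert_of_mem hq', hle⟩
    · exact ⟨p, Finset.mem_insert_self _ _, h⟩
  · rw [Finset.coe_insert]
    exact Set.insert_subset hpT σ.hT
  · rintro w ⟨hw, hwN⟩
    obtain ⟨l, hl, c, hc, rfl⟩ := (hmem w).1 hw
    refine add_mem hl (hz1 c ?_)
    have := Submodule.sub_mem σ.N hwN (σ.hL hl)
    simpa using this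
  · intro r
    show r • z ∈ σ.L ⊔ p.asIdeal • Submodule.span R {z} ↔ _
    rw [hmem]
    constructor
    · rintro ⟨l, hl, c, hc, e⟩
      have h1 : (r - c) • z = l := by rw [sub_smul, e]; simp
      have h2 := hz2 (r - c) (by rw [h1]; exact σ.hL hl)
      simpa using add_mem h2 hc
    · intro hr
      exact ⟨0, zero_mem _, r, hr, by simp⟩

lemma lemmaG (hwl : ∀ N : Submodule R M, (associatedPrimes R (M ⧸ N)).Finite)
    (T : Set (PrimeSpectrum R)) :
    ∃ N : Submodule R M, N.FG ∧ ∃ F : Finset (PrimeSpectrum R), (F : Set (PrimeSpectrum R)) ⊆ T ∧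
      ∀ p ∈ T, p ∈ Module.support R (M ⧸ N) → ∃ q ∈ F, q ≤ p := by
  by_contra hc
  push Not at hc
  have step : ∀ σ : St R M T, ∃ τ : St R M T, σ.N ≤ τ.N ∧ σ.L ≤ τ.L ∧ τ.L ⊓ σ.N ≤ σ.L ∧
      σ.S ⊆ τ.S ∧ ∃ p : PrimeSpectrum R, p ∈ τ.S ∧ p ∉ σ.S ∧
        ∃ z ∈ τ.N, ∀ r : R, r • z ∈ τ.L ↔ r ∈ p.asIdeal := fun σ =>
    st_step σ (hc σ.N σ.hN σ.S σ.hT)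
  choose nx h1 h2 h3 h4 P hP hP' z hz hzr using step
  let σ0 : St R M T :=
    { N := ⊥, L := ⊥, b := ⊤, S := ∅, hN := Submodule.fg_bot, hL := le_rfl, hb := by simp
      hS := fun p hp => (p.2.ne_top (top_le_iff.1 hp)).elim
      hT := by simp }
  let σ : ℕ → St R M T := fun n => Nat.rec σ0 (fun _ s => nx s) n
  have hσ : ∀ n, σ (n + 1) = nx (σ n) := fun n => rfl
  have hNm : Monotone (fun n => (σ n).N) := monotone_nat_of_le_succ (fun n => h1 (σ n))
  have hLm : Monotone (fun n => (σ n).L) := monotone_nat_of_le_succ (fun n => h2 (σ n))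
  have hSm : Monotone (fun n => (σ n).S) := monotone_nat_of_le_succ (fun n => h4 (σ n))
  have hLN : ∀ n m, n ≤ m → (σ m).L ⊓ (σ n).N ≤ (σ n).L := by
    intro n m hnm
    induction m, hnm using Nat.le_induction with
    | base => exact inf_le_left
    | succ m hnm ih =>
      refine le_trans (le_inf ?_ inf_le_right) ih
      exact le_trans (inf_le_inf_left _ (hNm hnm)) (h3 (σ m))
  let L : Submodule R M := ⨆ n, (σ n).L
  have memL : ∀ w, w ∈ L ↔ ∃ n, w ∈ (σ n).L := fun w =>
    Submodule.mem_iSup_of_directed _ hLm.directed_le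
  have hass : ∀ n, (P (σ n)).asIdeal ∈ associatedPrimes R (M ⧸ L) := by
    intro n
    rw [AssociatedPrimes.mem_iff, isAssociatedPrime_iff]
    refine ⟨(P (σ n)).2, L.mkQ (z (σ n)), ?_⟩
    ext r
    rw [Submodule.mem_colon_singleton, Submodule.mem_bot, ← map_smul, Submodule.mkQ_apply,
      Submodule.Quotient.mk_eq_zero, ← hzr (σ n), ← hσ, memL]
    constructor
    · exact fun h => ⟨n + 1, h⟩
    · rintro ⟨m, hm⟩
      exact hLN (n + 1) (max m (n + 1)) (le_max_right _ _)
        ⟨hLm (le_max_left _ _) hm, Submodule.smul_mem _ _ (hz (σ n))⟩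
  have hne : ∀ i j, i < j → P (σ i) ≠ P (σ j) := by
    intro i j hij e
    have hi : P (σ i) ∈ (σ (i + 1)).S := hP (σ i)
    have hj := hSm (show i + 1 ≤ j from hij) hi
    rw [e] at hj
    exact hP' (σ j) hj
  have hinj : Function.Injective (fun n => (P (σ n)).asIdeal) := by
    intro i j e
    have e' : P (σ i) = P (σ j) := PrimeSpectrum.ext e
    rcases lt_trichotomy i j with h | h | h
    · exact (hne i j h e').elim
    · exact h
    · exact (hne j i h e'.symm).elim
  exact Set.infinite_of_injective_forall_mem hinj hass (hwl L)

lemma krull_rel {r q m : Ideal R} [r.IsPrime] [q.IsPrime] [m.IsPrime] (h1 : r < q) (h2 : q < m)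
    (x : R) : m ∉ (r ⊔ Ideal.span {x}).minimalPrimes := by
  intro hm
  have hh := Ideal.map_height_le_one_of_mem_minimalPrimes hm
  have hcm : ∀ J : Ideal R, r ≤ J → Ideal.comap (Ideal.Quotient.mk r) (J.map (Ideal.Quotient.mk r)) = J :=
    fun J hJ => Ideal.comap_map_mk hJ
  have hpr : ∀ J : Ideal R, r ≤ J → J.IsPrime → (J.map (Ideal.Quotient.mk r)).IsPrime := by
    intro J hJ hJp
    exact Ideal.map_isPrime_of_surjective Ideal.Quotient.mk_surjective (by rwa [Ideal.mk_ker])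
  have hlt : ∀ J K : Ideal R, r ≤ J → J < K →
      J.map (Ideal.Quotient.mk r) < K.map (Ideal.Quotient.mk r) := by
    intro J K hJ hJK
    refine lt_of_le_of_ne (Ideal.map_mono hJK.le) (fun e => hJK.ne ?_)
    rw [← hcm J hJ, e, hcm K (hJ.trans hJK.le)]
  have i1 := hpr r le_rfl inferInstance
  have i2 := hpr q h1.le inferInstance
  have i3 := hpr m (h1.trans h2).le inferInstance
  have a1 := Ideal.height_add_one_le_of_lt_of_isPrime (hlt r q le_rfl h1)
  have a2 := Ideal.height_add_one_le_of_lt_of_isPrime (hlt q m h1.le h2)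
  have : (2 : ℕ∞) ≤ 1 := by
    calc (2 : ℕ∞) = 0 + 1 + 1 := by norm_num
      _ ≤ (r.map (Ideal.Quotient.mk r)).height + 1 + 1 := by gcongr; exact zero_le
      _ ≤ (q.map (Ideal.Quotient.mk r)).height + 1 := by gcongr
      _ ≤ _ := a2
      _ ≤ 1 := hh
  exact absurd this (by norm_num)

lemma wl_dim (hwl : ∀ N : Submodule R M, (associatedPrimes R (M ⧸ N)).Finite) :
    ∃ N : Submodule R M, N.FG ∧ ∀ r ∈ Module.support R (M ⧸ N), ∀ q ∈ Module.support R (M ⧸ N),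
      r < q → q.asIdeal.IsMaximal := by
  classical
  let T : Set (PrimeSpectrum R) :=
    {p | ¬ p.asIdeal.IsMaximal ∧ ∀ q, p < q → q.asIdeal.IsMaximal}
  obtain ⟨N, hN, F, hFT, hF⟩ := lemmaG hwl T
  refine ⟨N, hN, ?_⟩
  by_contra hc
  push Not at hc
  obtain ⟨r0, hr0, q0, hq0, hrq0, hmax0⟩ := hc
  have hTF : ∀ p ∈ T, p ∈ Module.support R (M ⧸ N) → p ∈ F := by
    intro p hp hps
    obtain ⟨q, hq, hqp⟩ := hF p hp hps
    rcases eq_or_lt_of_le hqp with e | h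
    · rw [← e]; exact hq
    · exact (hp.1 ((hFT hq).2 p h)).elim
  let B : Set (PrimeSpectrum R) := {r | r ∈ Module.support R (M ⧸ N) ∧
    ∃ q, r < q ∧ ¬ q.asIdeal.IsMaximal}
  obtain ⟨_, ⟨r, hrB, rfl⟩, hrmax⟩ := set_has_maximal_iff_noetherian.mpr
    (inferInstance : IsNoetherian R R) (PrimeSpectrum.asIdeal '' B)
    ⟨_, r0, ⟨hr0, q0, hrq0, hmax0⟩, rfl⟩
  obtain ⟨hrS, q, hrq, hqm⟩ := hrB
  have key : ∀ q', r < q' → ¬ q'.asIdeal.IsMaximal → q' ∈ F := by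
    intro q' hq' hm
    have hS : q' ∈ Module.support R (M ⧸ N) := Module.mem_support_mono hq'.le hrS
    refine hTF q' ⟨hm, fun q'' hq'' => ?_⟩ hS
    by_contra hm''
    exact hrmax _ ⟨q', ⟨hS, q'', hq'', hm''⟩, rfl⟩ hq'
  obtain ⟨m, hm, hqm'⟩ := Ideal.exists_le_maximal q.asIdeal q.2.ne_top
  have hqltm : q.asIdeal < m := lt_of_le_of_ne hqm' (fun e => hqm (e ▸ hm))
  have hmp : m.IsPrime := hm.isPrime
  have cover : (m : Set R) ⊆ ⋃ i ∈ ((F.filter (fun q' => q'.asIdeal < m) :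
      Finset (PrimeSpectrum R)) : Set (PrimeSpectrum R)), (i.asIdeal : Set R) := by
    intro x hx
    suffices h : ∃ q' : PrimeSpectrum R, r < q' ∧ q'.asIdeal < m ∧ x ∈ q'.asIdeal by
      obtain ⟨q', h1, h2, h3⟩ := h
      refine Set.mem_biUnion (x := q') ?_ h3
      rw [Finset.mem_coe, Finset.mem_filter]
      exact ⟨key q' h1 (fun hmax => h2.ne (hmax.eq_of_le hmp.ne_top h2.le)), h2⟩
    by_cases hxr : x ∈ r.asIdeal
    · exact ⟨q, hrq, hqltm, hrq.le hxr⟩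
    · have hle : r.asIdeal ⊔ Ideal.span {x} ≤ m :=
        sup_le ((show r.asIdeal ≤ q.asIdeal from hrq.le).trans hqm')
          ((Ideal.span_singleton_le_iff_mem _).2 hx)
      obtain ⟨q', hq', hq'm⟩ := Ideal.exists_minimalPrimes_le hle
      have hxq : x ∈ q' := hq'.1.2 (Ideal.mem_sup_right (Ideal.mem_span_singleton_self x))
      refine ⟨⟨q', hq'.1.1⟩, ?_, ?_, hxq⟩
      · refine lt_of_le_of_ne (show r.asIdeal ≤ q' from le_sup_left.trans hq'.1.2) ?_
        intro e
        have e' : r.asIdeal = q' := congrArg PrimeSpectrum.asIdeal e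
        rw [e'] at hxr
        exact hxr hxq
      · refine lt_of_le_of_ne hq'm ?_
        rintro rfl
        exact krull_rel (show r.asIdeal < q.asIdeal from hrq) hqltm x hq'
  obtain ⟨i, hi, hmi⟩ := (Ideal.subset_union_prime (f := PrimeSpectrum.asIdeal) q q
    (fun i _ _ _ => i.2)).1 cover
  rw [Finset.mem_filter] at hi
  exact absurd hmi (not_le_of_gt hi.2)

end

end Cof

theorem stmt10 {R : Type u} [CommRing R] [IsNoetherianRing R] (a : Ideal R)
    (M : ModuleCat.{u} R)
    (hwl : ∀ N : Submodule R M, (associatedPrimes R (M ⧸ N)).Finite)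
    (hsupp : Module.support R M ⊆ PrimeSpectrum.zeroLocus (a : Set R)) :
    IsCofinite a M ↔
      (Module.Finite R (extQuot a 0 M) ∧ Module.Finite R (extQuot a 1 M)) := by
  constructor
  · intro h
    exact ⟨h.2 0, h.2 1⟩
  · rintro ⟨h0, h1⟩
    rw [Cof.finite_extQuot_iff] at h0 h1
    have h0' : Cof.FE a 0 M := isNoetherian_of_isNoetherianRing_of_finite R _
    have h1' : Cof.FE a 1 M := isNoetherian_of_isNoetherianRing_of_finite R _
    obtain ⟨N, hN, hdim⟩ := Cof.wl_dim hwl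
    have hNf : Module.Finite R N := Module.Finite.iff_fg.2 hN
    have hex : Function.Exact N.subtype N.mkQ := by rw [LinearMap.exact_iff]; simp
    have hs : Module.support R (M ⧸ N) ⊆ PrimeSpectrum.zeroLocus (a : Set R) :=
      (Module.support_subset_of_surjective N.mkQ N.mkQ_surjective).trans hsupp
    have hQ : ∀ i, Cof.FE a i (M ⧸ N) := Cof.level_two _ hs hdim
      (Cof.FE.right N.subtype_injective N.mkQ_surjective hex h0' (Cof.FE.of_finite a 1))
      (Cof.FE.right N.subtype_injective N.mkQ_surjective hex h1' (Cof.FE.of_finite a 2))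
    refine ⟨hsupp, fun i => ?_⟩
    rw [Cof.finite_extQuot_iff]
    have hM : Cof.FE a i M :=
      Cof.FE.mid N.subtype_injective N.mkQ_surjective hex (Cof.FE.of_finite a i) (hQ i)
    have hM' : IsNoetherian R (Abelian.Ext (ModuleCat.of R (R ⧸ a)) M i) := hM
    infer_instance
end

section
/- Let R be a commutative noetherian ring with identity, a an ideal of R, and n ∈ {0, 1}. Let M be a non-zero finitely generated R-module and t a non-negative integer such that the local cohomology module H^i_a(M) is FD_{≤ n} for every i < t. Then H^i_a(M) is a-cofinite for every i = 0, …, t−1. -/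
universe u

open CategoryTheory

namespace Cofin
section Bridge
variable {R : Type u} [CommRing R]

/-- cocycles -/
noncomputable def cocyc {X : ModuleCat.{u} R} (P : ProjectiveResolution X) (Y : ModuleCat.{u} R) (n : ℕ) :
    Submodule R (P.complex.X n ⟶ Y) where
  carrier := {f | P.complex.d (n+1) n ≫ f = 0}
  add_mem' := by intro a b ha hb; simp_all
  zero_mem' := by simp
  smul_mem' := by intro c x hx; simp_all

noncomputable def toNew {X : ModuleCat.{u} R} (P : ProjectiveResolution X) (Y : ModuleCat.{u} R) (n : ℕ) :
    cocyc P Y n →ₗ[R] Abelian.Ext.{u} X Y n where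
  toFun f := P.extMk f.1 (n+1) rfl f.2
  map_add' f g := (P.add_extMk f.1 g.1 (n+1) rfl f.2 g.2).symm
  map_smul' r f := by
    have := P.extMk_comp_mk₀ f.1 (n+1) rfl f.2 (r • 𝟙 Y)
    rw [RingHom.id_apply, Abelian.Ext.smul_eq_comp_mk₀, this]
    congr 1

lemma toNew_surj {X : ModuleCat.{u} R} (P : ProjectiveResolution X) (Y : ModuleCat.{u} R) (n : ℕ) :
    Function.Surjective (toNew P Y n) := by
  intro x
  obtain ⟨f, hf, h⟩ := P.extMk_surjective x (n+1) rfl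
  exact ⟨⟨f, hf⟩, h⟩

lemma toNew_eq_zero {X : ModuleCat.{u} R} (P : ProjectiveResolution X) (Y : ModuleCat.{u} R) (n : ℕ)
    (f : cocyc P Y n) : toNew P Y n f = 0 ↔ ∃ (p : ℕ) (g : P.complex.X p ⟶ Y), P.complex.d n p ≫ g = f.1 := by
  cases n with
  | succ n =>
    refine (P.extMk_eq_zero_iff f.1 (n+1+1) rfl f.2 n rfl).trans ⟨fun ⟨g, hg⟩ => ⟨n, g, hg⟩, ?_⟩
    rintro ⟨p, g, hg⟩
    by_cases h : p = n
    · subst h; exact ⟨g, hg⟩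
    · rw [P.complex.shape _ _ (by simp; omega)] at hg
      exact ⟨0, by simpa using hg⟩
  | zero =>
    constructor
    · intro h
      refine ⟨0, 0, ?_⟩
      obtain ⟨f, hf⟩ := f
      change P.complex.d 1 0 ≫ f = 0 at hf
      change P.extMk f 1 rfl hf = 0 at h
      change _ = f
      rw [← P.extEquivCohomologyClass.apply_eq_iff_eq,
        ProjectiveResolution.extEquivCohomologyClass_extMk, ProjectiveResolution.extEquivCohomologyClass_zero,
        CochainComplex.HomComplex.CohomologyClass.mk_eq_zero_iff,
        CochainComplex.HomComplex.Cocycle.toSingleMk_mem_coboundaries_iff _ _ _ _ _ (1) (by simp)] at h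
      obtain ⟨g, hg⟩ := h
      have hz : Limits.IsZero (P.cochainComplex.X 1) :=
        P.cochainComplex.isZero_of_isStrictlyLE 0 1 (by simp)
      rw [hz.eq_of_src g 0, Limits.comp_zero] at hg
      rw [← cancel_epi (P.cochainComplexXIso (-(0:ℕ)) 0 rfl).hom, ← hg]
      simp
    · rintro ⟨p, g, hg⟩
      rw [P.complex.shape _ _ (by simp)] at hg
      have : f = 0 := by ext1; simpa using hg.symm
      rw [this, map_zero]

/-- cocycle complex element -/
noncomputable def toCyc {X : ModuleCat.{u} R} (P : ProjectiveResolution X) (Y : ModuleCat.{u} R) (n : ℕ) :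
    ModuleCat.of R (cocyc P Y n) ⟶ (P.complex.linearYonedaObj R Y).cycles n :=
  (P.complex.linearYonedaObj R Y).liftCycles (ModuleCat.ofHom (cocyc P Y n).subtype) (n+1) (by simp)
    (by ext f; exact f.2)

noncomputable def toOld {X : ModuleCat.{u} R} (P : ProjectiveResolution X) (Y : ModuleCat.{u} R) (n : ℕ) :
    ModuleCat.of R (cocyc P Y n) ⟶ ((Ext R (ModuleCat.{u} R) n).obj (Opposite.op X)).obj Y :=
  toCyc P Y n ≫ (P.complex.linearYonedaObj R Y).homologyπ n ≫ (P.isoExt n Y).inv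

lemma toCyc_i {X : ModuleCat.{u} R} (P : ProjectiveResolution X) (Y : ModuleCat.{u} R) (n : ℕ) :
  toCyc P Y n ≫ (P.complex.linearYonedaObj R Y).iCycles n = (ModuleCat.ofHom (cocyc P Y n).subtype) := by
  exact HomologicalComplex.liftCycles_i _ _ _ _ _

lemma toCyc_surj {X : ModuleCat.{u} R} (P : ProjectiveResolution X) (Y : ModuleCat.{u} R) (n : ℕ) :
    Function.Surjective (toCyc P Y n) := by
  intro x
  have hinj : Function.Injective ((P.complex.linearYonedaObj R Y).iCycles n) :=
    (ModuleCat.mono_iff_injective _).1 inferInstance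
  have h0 := ConcreteCategory.congr_hom ((P.complex.linearYonedaObj R Y).iCycles_d n (n+1)) x
  refine ⟨⟨(P.complex.linearYonedaObj R Y).iCycles n x, h0⟩, hinj ?_⟩
  have := ConcreteCategory.congr_hom (toCyc_i P Y n) ⟨(P.complex.linearYonedaObj R Y).iCycles n x, h0⟩
  exact this

lemma toOld_surj {X : ModuleCat.{u} R} (P : ProjectiveResolution X) (Y : ModuleCat.{u} R) (n : ℕ) :
    Function.Surjective (toOld P Y n) := by
  have h1 : Function.Surjective ((P.complex.linearYonedaObj R Y).homologyπ n ≫ (P.isoExt (R := R) n Y).inv) :=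
    (ModuleCat.epi_iff_surjective _).1 inferInstance
  exact h1.comp (toCyc_surj P Y n)

lemma toOld_eq_zero {X : ModuleCat.{u} R} (P : ProjectiveResolution X) (Y : ModuleCat.{u} R) (n : ℕ)
    (f : cocyc P Y n) : toOld P Y n f = 0 ↔ ∃ (p : ℕ) (g : P.complex.X p ⟶ Y), P.complex.d n p ≫ g = f.1 := by
  set K := P.complex.linearYonedaObj R Y
  have hinj : Function.Injective (P.isoExt (R := R) n Y).inv :=
    (ModuleCat.mono_iff_injective _).1 inferInstance
  have hi : Function.Injective (K.iCycles n) :=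
    (ModuleCat.mono_iff_injective _).1 inferInstance
  have h1 : toOld P Y n f = 0 ↔ K.homologyπ n (toCyc P Y n f) = 0 := by
    rw [← map_eq_zero_iff (P.isoExt (R := R) n Y).inv.hom hinj]; rfl
  have hf : K.iCycles n (toCyc P Y n f) = f.1 := ConcreteCategory.congr_hom (toCyc_i P Y n) f
  rw [h1]
  have hex : ∀ p, (hp : (ComplexShape.up ℕ).prev n = p) → (K.homologyπ n (toCyc P Y n f) = 0 ↔ ∃ g, K.toCycles p n g = toCyc P Y n f) := by
    intro p hp
    have h2 := ShortComplex.exact_of_g_is_cokernel (ShortComplex.mk _ _ (K.toCycles_comp_homologyπ p n)) (K.homologyIsCokernel p n hp)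
    constructor
    · intro h
      exact (ShortComplex.moduleCat_exact_iff _).1 h2 _ h
    · rintro ⟨g, hg⟩
      rw [← hg]
      exact ConcreteCategory.congr_hom (K.toCycles_comp_homologyπ p n) g
  rw [hex _ rfl]
  have hd : ∀ p (g : P.complex.X p ⟶ Y), K.iCycles n (K.toCycles p n g) = P.complex.d n p ≫ g := by
    intro p g
    exact ConcreteCategory.congr_hom (K.toCycles_i p n) g
  constructor
  · rintro ⟨g, hg⟩
    exact ⟨_, g, (hd _ g).symm.trans ((congrArg _ hg).trans hf)⟩
  · rintro ⟨p, g, hg⟩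
    by_cases hp : p + 1 = n
    · have : (ComplexShape.up ℕ).prev n = p := (ComplexShape.up ℕ).prev_eq' hp
      rw [this]
      exact ⟨g, hi (by rw [hf, hd, hg])⟩
    · rw [P.complex.shape _ _ hp] at hg
      refine ⟨0, hi ?_⟩
      rw [hf, ← hg, Limits.zero_comp, map_zero, map_zero]; rfl

/-- comparison -/
noncomputable def extE (X Y : ModuleCat.{u} R) (n : ℕ) :
    Abelian.Ext.{u} X Y n ≃ₗ[R] ((Ext R (ModuleCat.{u} R) n).obj (Opposite.op X)).obj Y :=
  let P := projectiveResolution X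
  have h : LinearMap.ker (toNew P Y n) = LinearMap.ker (toOld P Y n).hom := by
    ext f
    rw [LinearMap.mem_ker, LinearMap.mem_ker, toNew_eq_zero]
    exact (toOld_eq_zero P Y n f).symm
  ((toNew P Y n).quotKerEquivOfSurjective (toNew_surj P Y n)).symm.trans
    ((Submodule.quotEquivOfEq _ _ h).trans
      ((toOld P Y n).hom.quotKerEquivOfSurjective (toOld_surj P Y n)))

lemma extE_mk (X Y : ModuleCat.{u} R) (n : ℕ) (f) :
    extE X Y n (toNew (projectiveResolution X) Y n f) = toOld (projectiveResolution X) Y n f := by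
  simp only [extE, LinearEquiv.trans_apply]
  have : ((toNew (projectiveResolution X) Y n).quotKerEquivOfSurjective (toNew_surj _ Y n)).symm
      (toNew (projectiveResolution X) Y n f) = Submodule.Quotient.mk f := by
    rw [LinearEquiv.symm_apply_eq]; rfl
  rw [this]
  rfl

/-- induced map on Hom complexes -/
noncomputable def psi {A B : ChainComplex (ModuleCat.{u} R) ℕ} (φ : A ⟶ B) (Y : ModuleCat.{u} R) :
    B.linearYonedaObj R Y ⟶ A.linearYonedaObj R Y :=
  (HomologicalComplex.unopFunctor _ _).map
    ((((linearYoneda R (ModuleCat.{u} R)).obj Y).rightOp.mapHomologicalComplex _).map φ).op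

lemma psi_f {A B : ChainComplex (ModuleCat.{u} R) ℕ} (φ : A ⟶ B) (Y : ModuleCat.{u} R) (n : ℕ)
    (f : B.X n ⟶ Y) : (psi φ Y).f n f = φ.f n ≫ f := rfl

lemma sq_aux {C : Type*} [Category* C] {A B X D A' B' : C} {a1 : A ⟶ B} {b1 : B ⟶ X} {c1 : X ⟶ D}
    {d : A ⟶ A'} {a2 : A' ⟶ B'} {b2 : B' ⟶ D} {m : B ⟶ B'} (h : a1 ≫ m = d ≫ a2)
    (h' : b1 ≫ c1 = m ≫ b2) : (a1 ≫ b1) ≫ c1 = d ≫ a2 ≫ b2 := by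
  rw [Category.assoc, h', ← Category.assoc, h, Category.assoc]

lemma ext_map_eq {X X' : ModuleCat.{u} R} (P : ProjectiveResolution X) (P' : ProjectiveResolution X')
    (g : X' ⟶ X) (φ : ProjectiveResolution.Hom P' P g) (Y : ModuleCat.{u} R) (n : ℕ) :
    (P.isoExt n Y).inv ≫ ((Ext R (ModuleCat.{u} R) n).map g.op).app Y =
      HomologicalComplex.homologyMap (psi φ.hom Y) n ≫ (P'.isoExt n Y).inv := by
  let F := ((linearYoneda R (ModuleCat.{u} R)).obj Y).rightOp
  have h1 : ((Ext R (ModuleCat.{u} R) n).map g.op).app Y = ((F.leftDerived n).map g).unop := rfl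
  have h2 := ProjectiveResolution.isoLeftDerivedObj_hom_naturality g P' P φ.hom
    (φ.hom_f_zero_comp_π_f_zero.trans (by simp)) F n
  have h3 := congrArg Quiver.Hom.unop h2
  have h4 := congrArg Quiver.Hom.unop (HomologicalComplex.homologyOp_hom_naturality (psi φ.hom Y) n)
  have e1 : (P.isoExt (R := R) n Y).inv = ((P.complex.linearYonedaObj R Y).homologyOp n).hom.unop ≫
    (P.isoLeftDerivedObj F n).hom.unop := rfl
  have e2 : (P'.isoExt (R := R) n Y).inv = ((P'.complex.linearYonedaObj R Y).homologyOp n).hom.unop ≫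
    (P'.isoLeftDerivedObj F n).hom.unop := rfl
  rw [h1, e1, e2]
  exact sq_aux h4 h3

lemma toOld_nat {X X' : ModuleCat.{u} R} (P : ProjectiveResolution X) (P' : ProjectiveResolution X')
    (g : X' ⟶ X) (φ : ProjectiveResolution.Hom P' P g) (Y : ModuleCat.{u} R) (n : ℕ)
    (f : cocyc P Y n) (h : φ.hom.f n ≫ f.1 ∈ cocyc P' Y n) :
    ((Ext R (ModuleCat.{u} R) n).map g.op).app Y (toOld P Y n f) =
      toOld P' Y n ⟨φ.hom.f n ≫ f.1, h⟩ := by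
  have h1 : toOld P Y n ≫ ((Ext R (ModuleCat.{u} R) n).map g.op).app Y =
      toCyc P Y n ≫ HomologicalComplex.cyclesMap (psi φ.hom Y) n ≫
        (P'.complex.linearYonedaObj R Y).homologyπ n ≫ (P'.isoExt n Y).inv := by
    rw [toOld, Category.assoc, Category.assoc, ext_map_eq P P' g φ,
      HomologicalComplex.homologyπ_naturality_assoc]
  have h2 := ConcreteCategory.congr_hom h1 f
  refine h2.trans ?_
  have hi : Function.Injective ((P'.complex.linearYonedaObj R Y).iCycles n) :=
    (ModuleCat.mono_iff_injective _).1 inferInstance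
  have h3 : HomologicalComplex.cyclesMap (psi φ.hom Y) n (toCyc P Y n f) =
      toCyc P' Y n ⟨φ.hom.f n ≫ f.1, h⟩ := by
    apply hi
    refine (ConcreteCategory.congr_hom (HomologicalComplex.cyclesMap_i (psi φ.hom Y) n) (toCyc P Y n f)).trans ?_
    refine Eq.trans ?_ (ConcreteCategory.congr_hom (toCyc_i P' Y n) _).symm
    refine (congrArg ((psi φ.hom Y).f n) (ConcreteCategory.congr_hom (toCyc_i P Y n) f)).trans ?_
    rfl
  exact congrArg ((P'.complex.linearYonedaObj R Y).homologyπ n ≫ (P'.isoExt (R := R) n Y).inv) h3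

lemma extE_nat {X X' : ModuleCat.{u} R} (g : X' ⟶ X) (Y : ModuleCat.{u} R) (n : ℕ)
    (x : Abelian.Ext.{u} X Y n) :
    ((Ext R (ModuleCat.{u} R) n).map g.op).app Y (extE X Y n x) =
      extE X' Y n ((Abelian.Ext.mk₀ g).comp x (zero_add n)) := by
  obtain ⟨f, rfl⟩ := toNew_surj (projectiveResolution X) Y n x
  let φ : ProjectiveResolution.Hom (projectiveResolution X') (projectiveResolution X) g := 
    { hom := ProjectiveResolution.lift g _ _
      hom_f_zero_comp_π_f_zero := ProjectiveResolution.lift_commutes_zero _ _ _ }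
  have h : φ.hom.f n ≫ f.1 ∈ cocyc (projectiveResolution X') Y n := by
    change _ ≫ _ ≫ _ = 0
    have := f.2
    change _ ≫ _ = 0 at this
    rw [← φ.hom.comm_assoc, this, Limits.comp_zero]
  rw [extE_mk, toOld_nat _ _ g φ Y n f h, ← extE_mk]
  congr 1
  exact (ProjectiveResolution.mk₀_comp_extMk f.1 (n+1) rfl f.2 φ).symm
end Bridge
end Cofin


set_option linter.unusedSectionVars false
namespace Cofin
section FinExt
variable {R : Type u} [CommRing R]

/-- finiteness of `Ext^i(R/a, X)`. -/
def Fin' (a : Ideal R) (i : ℕ) (X : Type u) [AddCommGroup X] [Module R X] : Prop :=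
  Module.Finite R (Abelian.Ext.{u} (ModuleCat.of R (R ⧸ a)) (ModuleCat.of R X) i)

lemma finite_extQuot_iff (a : Ideal R) (i : ℕ) (X : ModuleCat.{u} R) :
    Module.Finite R (((Ext R (ModuleCat.{u} R) i).obj (Opposite.op (ModuleCat.of R (R ⧸ a)))).obj X) ↔
      Fin' a i X :=
  ⟨fun _ => Module.Finite.equiv (extE (ModuleCat.of R (R ⧸ a)) X i).symm,
   fun h => by unfold Fin' at h; exact Module.Finite.equiv (extE (ModuleCat.of R (R ⧸ a)) X i)⟩

variable {A B C : Type u} [AddCommGroup A] [Module R A] [AddCommGroup B] [Module R B]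
  [AddCommGroup C] [Module R C]

/-- short complex from maps -/
abbrev sc (f : A →ₗ[R] B) (g : B →ₗ[R] C) (h : Function.Exact f g) : ShortComplex (ModuleCat.{u} R) :=
  ShortComplex.mk (ModuleCat.ofHom f) (ModuleCat.ofHom g) (by ext x; exact h.apply_apply_eq_zero x)

lemma sc_exact {f : A →ₗ[R] B} {g : B →ₗ[R] C} (hf : Function.Injective f) (hg : Function.Surjective g)
    (h : Function.Exact f g) : (sc f g h).ShortExact :=
  ModuleCat.shortComplex_shortExact _ h hf hg

lemma finite_of_exact [IsNoetherianRing R] {f : A →ₗ[R] B} {g : B →ₗ[R] C} (h : ∀ b, g b = 0 → ∃ x, f x = b)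
    [Module.Finite R A] [Module.Finite R C] : Module.Finite R B := by
  have : IsNoetherian R A := isNoetherian_of_isNoetherianRing_of_finite R A
  have : IsNoetherian R C := isNoetherian_of_isNoetherianRing_of_finite R C
  refine ⟨Submodule.fg_of_fg_map_of_fg_inf_ker g (IsNoetherian.noetherian _) ?_⟩
  have h1 : (⊤ ⊓ LinearMap.ker g) = ((LinearMap.ker g).comap f).map f := by
    rw [top_inf_eq, Submodule.map_comap_eq]
    refine (inf_eq_right.2 ?_).symm
    intro b hb
    obtain ⟨x, hx⟩ := h b hb
    exact ⟨x, hx⟩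
  rw [h1]
  exact (IsNoetherian.noetherian _).map f

variable [IsNoetherianRing R] (a : Ideal R)

lemma Fin'.mid {f : A →ₗ[R] B} {g : B →ₗ[R] C} (hf : Function.Injective f) (hg : Function.Surjective g)
    (h : Function.Exact f g) {i : ℕ} (h1 : Fin' a i A) (h2 : Fin' a i C) : Fin' a i B := by
  unfold Fin' at *
  exact finite_of_exact
    (f := (Abelian.Ext.mk₀ (sc f g h).f).postcompOfLinear R _ (add_zero i))
    (g := (Abelian.Ext.mk₀ (sc f g h).g).postcompOfLinear R _ (add_zero i))
    (fun b hb => Abelian.Ext.covariant_sequence_exact₂ _ (sc_exact hf hg h) b hb)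

lemma Fin'.right {f : A →ₗ[R] B} {g : B →ₗ[R] C} (hf : Function.Injective f) (hg : Function.Surjective g)
    (h : Function.Exact f g) {i : ℕ} (h1 : Fin' a i B) (h2 : Fin' a (i+1) A) : Fin' a i C := by
  unfold Fin' at *
  exact finite_of_exact
    (f := (Abelian.Ext.mk₀ (sc f g h).g).postcompOfLinear R _ (add_zero i))
    (g := (sc_exact hf hg h).extClass.postcompOfLinear R _ rfl)
    (fun b hb => Abelian.Ext.covariant_sequence_exact₃ _ (sc_exact hf hg h) b rfl hb)

lemma Fin'.left {f : A →ₗ[R] B} {g : B →ₗ[R] C} (hf : Function.Injective f) (hg : Function.Surjective g)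
    (h : Function.Exact f g) {i : ℕ} (h1 : Fin' a i C) (h2 : Fin' a (i+1) B) : Fin' a (i+1) A := by
  unfold Fin' at *
  exact finite_of_exact
    (f := (sc_exact hf hg h).extClass.postcompOfLinear R _ rfl)
    (g := (Abelian.Ext.mk₀ (sc f g h).f).postcompOfLinear R _ (add_zero (i+1)))
    (fun b hb => Abelian.Ext.covariant_sequence_exact₁ _ (sc_exact hf hg h) b hb rfl)

/-- Hom(R/a, X) = 0:_X a -/
noncomputable def extZeroEquiv (X : Type u) [AddCommGroup X] [Module R X] :
    Abelian.Ext.{u} (ModuleCat.of R (R ⧸ a)) (ModuleCat.of R X) 0 ≃ₗ[R] ((R ⧸ a) →ₗ[R] X) :=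
  Abelian.Ext.linearEquiv₀.trans ModuleCat.homLinearEquiv

lemma fin_zero_iff_hom (X : Type u) [AddCommGroup X] [Module R X] :
    Fin' a 0 X ↔ Module.Finite R ((R ⧸ a) →ₗ[R] X) :=
  Module.Finite.equiv_iff (extZeroEquiv a X)

lemma Fin'.left_zero {f : A →ₗ[R] B} (hf : Function.Injective f) (h2 : Fin' a 0 B) : Fin' a 0 A := by
  rw [fin_zero_iff_hom] at *
  refine Module.Finite.of_injective (LinearMap.compRight R f : ((R ⧸ a) →ₗ[R] A) →ₗ[R] _) ?_
  intro x y hxy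
  ext1
  have := LinearMap.congr_fun hxy
  exact LinearMap.ext fun z => hf (this _)

lemma Fin'.congr (e : A ≃ₗ[R] B) {i : ℕ} (h : Fin' a i A) : Fin' a i B := by
  have hz : Fin' a i PUnit.{u+1} := by
    unfold Fin'; infer_instance
  exact Fin'.mid a (f := e.toLinearMap) (g := (0 : B →ₗ[R] PUnit.{u+1})) e.injective (fun x => ⟨0, rfl⟩)
    (fun x => ⟨fun _ => ⟨e.symm x, by simp⟩, fun _ => rfl⟩) h hz

lemma Fin'.of_finite (X : Type u) [AddCommGroup X] [Module R X] [Module.Finite R X] (i : ℕ) :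
    Fin' a i X := by
  unfold Fin'; infer_instance

/-- annihilated by `a` -/
def ann0 (a : Ideal R) (X : Type u) [AddCommGroup X] [Module R X] : Submodule R X where
  carrier := {x | ∀ r ∈ a, r • x = 0}
  add_mem' := by intro x y hx hy r hr; rw [smul_add, hx r hr, hy r hr, add_zero]
  zero_mem' := by intro r _; simp
  smul_mem' := by intro c x hx r hr; rw [smul_comm, hx r hr, smul_zero]

lemma mem_ann0 {X : Type u} [AddCommGroup X] [Module R X] {x : X} : x ∈ ann0 a X ↔ ∀ r ∈ a, r • x = 0 := Iff.rfl

lemma fin_zero_iff (X : Type u) [AddCommGroup X] [Module R X] : Fin' a 0 X ↔ (ann0 a X).FG := by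
  rw [fin_zero_iff_hom, ← Module.Finite.iff_fg]
  let ev : ((R ⧸ a) →ₗ[R] X) →ₗ[R] ann0 a X :=
    { toFun := fun f => ⟨f 1, fun r hr => by
        rw [← map_smul, Algebra.smul_def, mul_one, Ideal.Quotient.algebraMap_eq,
          (Ideal.Quotient.eq_zero_iff_mem).2 hr, map_zero]⟩
      map_add' := fun f g => rfl
      map_smul' := fun r f => rfl }
  have hb : Function.Bijective ev := by
    constructor
    · intro f g h
      have h1 : f 1 = g 1 := congrArg Subtype.val h
      refine LinearMap.ext fun z => ?_
      obtain ⟨r, rfl⟩ := Ideal.Quotient.mk_surjective z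
      have : Ideal.Quotient.mk a r = r • (1 : R ⧸ a) := by simp [Algebra.smul_def]
      rw [this, map_smul, map_smul, h1]
    · intro x
      refine ⟨Submodule.liftQ a (LinearMap.toSpanSingleton R X x.1) ?_, ?_⟩
      · intro r hr; simpa using x.2 r hr
      · ext1
        exact (Submodule.liftQ_apply a (LinearMap.toSpanSingleton R X x.1) 1).trans (one_smul _ _)
  exact Module.Finite.equiv_iff (LinearEquiv.ofBijective ev hb)

end FinExt
end Cofin

set_option linter.unusedSectionVars false
namespace Cofin
section Alg
variable {R : Type u} [CommRing R]
variable {X : Type u} [AddCommGroup X] [Module R X]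

/-- a-torsion -/
def Tors (a : Ideal R) (X : Type u) [AddCommGroup X] [Module R X] : Prop :=
  ∀ x : X, ∃ k : ℕ, ∀ r ∈ a ^ k, r • x = 0

/-- one-step secondary decomposition with avoidance -/
lemma secondary_aux [IsNoetherianRing R] (a : Ideal R) [IsArtinian R X] (Y : Submodule R X) :
    ∃ F : Finset (Ideal R), (∀ P ∈ F, P.IsPrime) ∧ ∀ x : R, (∀ P ∈ F, a ≤ P ∨ x ∉ P) →
      ∃ k : ℕ, ∀ y ∈ Y, ∃ z : X, ∃ n ∈ ann0 (a ^ k) X, y = x • z + n := by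
  classical
  induction Y using WellFoundedLT.induction with
  | ind Y ih =>
  by_cases hbot : Y = ⊥
  · subst hbot
    refine ⟨∅, by simp, fun x _ => ⟨0, fun y hy => ⟨0, 0, zero_mem _, ?_⟩⟩⟩
    simpa using hy
  by_cases hred : ∃ Y1 Y2 : Submodule R X, Y1 < Y ∧ Y2 < Y ∧ Y = Y1 ⊔ Y2
  · obtain ⟨Y1, Y2, h1, h2, rfl⟩ := hred
    obtain ⟨F1, hF1, hx1⟩ := ih Y1 h1
    obtain ⟨F2, hF2, hx2⟩ := ih Y2 h2
    refine ⟨F1 ∪ F2, ?_, ?_⟩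
    · intro P hP
      rcases Finset.mem_union.1 hP with h | h
      exacts [hF1 P h, hF2 P h]
    · intro x hx
      obtain ⟨k1, hk1⟩ := hx1 x fun P hP => hx P (Finset.mem_union_left _ hP)
      obtain ⟨k2, hk2⟩ := hx2 x fun P hP => hx P (Finset.mem_union_right _ hP)
      refine ⟨k1 + k2, fun y hy => ?_⟩
      obtain ⟨y1, hy1, y2, hy2, rfl⟩ := Submodule.mem_sup.1 hy
      obtain ⟨z1, n1, hn1, rfl⟩ := hk1 y1 hy1
      obtain ⟨z2, n2, hn2, rfl⟩ := hk2 y2 hy2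
      refine ⟨z1 + z2, n1 + n2, add_mem ?_ ?_, by rw [smul_add]; abel⟩
      · exact fun r hr => hn1 r (Ideal.pow_le_pow_right (Nat.le_add_right _ _) hr)
      · exact fun r hr => hn2 r (Ideal.pow_le_pow_right (Nat.le_add_left _ _) hr)
  -- irreducible
  let P := (Module.annihilator R Y).radical
  have hsec : ∀ r : R, r ∈ P ∨ ∀ y ∈ Y, ∃ y' ∈ Y, y = r • y' := by
    intro r
    let c : ℕ →o (Submodule R X)ᵒᵈ :=
      ⟨fun k => OrderDual.toDual (Y.map (LinearMap.lsmul R X (r ^ k))), by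
        intro i j hij
        obtain ⟨d, rfl⟩ := Nat.exists_eq_add_of_le hij
        rintro _ ⟨y, hy, rfl⟩
        refine ⟨r ^ d • y, Y.smul_mem _ hy, ?_⟩
        simp only [LinearMap.lsmul_apply, pow_add, mul_smul]⟩
    obtain ⟨n, hn⟩ := IsArtinian.monotone_stabilizes (R := R) (M := X) c
    have hstab : ∀ y ∈ Y, ∃ w ∈ Y, r ^ (n+1) • y = r ^ (n+1) • r ^ (n+1) • w := by
      intro y hy
      have h1 : c (n+1) = c (n+1 + (n+1)) := (hn (n+1) (by omega)).symm.trans (hn _ (by omega))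
      have h2 : r ^ (n+1) • y ∈ Y.map (LinearMap.lsmul R X (r ^ (n+1))) := ⟨y, hy, rfl⟩
      have h3 : r ^ (n+1) • y ∈ Y.map (LinearMap.lsmul R X (r ^ (n+1+(n+1)))) := by
        have : Y.map (LinearMap.lsmul R X (r ^ (n+1))) = Y.map (LinearMap.lsmul R X (r ^ (n+1+(n+1)))) := h1
        rwa [← this]
      obtain ⟨w, hw, h⟩ := h3
      refine ⟨w, hw, ?_⟩
      rw [← h, ← mul_smul, ← pow_add]; rfl
    let Y1 := Y.map (LinearMap.lsmul R X (r ^ (n+1)))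
    let Y2 := Y ⊓ LinearMap.ker (LinearMap.lsmul R X (r ^ (n+1)))
    have hY1 : Y1 ≤ Y := by
      rintro _ ⟨y, hy, rfl⟩; exact Y.smul_mem _ hy
    have hY2 : Y2 ≤ Y := inf_le_left
    have hsum : Y = Y1 ⊔ Y2 := by
      refine le_antisymm ?_ (sup_le hY1 hY2)
      intro y hy
      obtain ⟨w, hw, h⟩ := hstab y hy
      refine Submodule.mem_sup.2 ⟨r ^ (n+1) • w, ⟨w, hw, rfl⟩, y - r ^ (n+1) • w, ⟨sub_mem hy (Y.smul_mem _ hw), ?_⟩, by abel⟩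
      change r ^ (n+1) • (y - r ^ (n+1) • w) = 0
      rw [smul_sub, h, sub_self]
    by_cases h1 : Y1 = Y
    · right
      intro y hy
      rw [← h1] at hy
      obtain ⟨w, hw, rfl⟩ := hy
      exact ⟨r ^ n • w, Y.smul_mem _ hw, by simp [pow_succ', mul_smul]⟩
    by_cases h2 : Y2 = Y
    · left
      refine ⟨n+1, Module.mem_annihilator.2 fun y => ?_⟩
      have : (y : X) ∈ Y2 := h2.ge y.2
      ext1
      exact this.2
    · exact absurd ⟨Y1, Y2, lt_of_le_of_ne hY1 h1, lt_of_le_of_ne hY2 h2, hsum⟩ hred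
  have hpow : ∀ r : R, (∀ y ∈ Y, ∃ y' ∈ Y, y = r • y') → ∀ k : ℕ, ∀ y ∈ Y, ∃ y' ∈ Y, y = r ^ k • y' := by
    intro r hr k
    induction k with
    | zero => exact fun y hy => ⟨y, hy, by simp⟩
    | succ k ihk =>
      intro y hy
      obtain ⟨y1, hy1, rfl⟩ := hr y hy
      obtain ⟨y2, hy2, rfl⟩ := ihk y1 hy1
      exact ⟨y2, hy2, by rw [pow_succ', mul_smul]⟩
  have hnot : ∀ r : R, (∀ y ∈ Y, ∃ y' ∈ Y, y = r • y') → r ∉ P := by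
    rintro r hr ⟨k, hk⟩
    apply hbot
    rw [eq_bot_iff]
    intro y hy
    obtain ⟨y', hy', rfl⟩ := hpow r hr k y hy
    have := Module.mem_annihilator.1 hk ⟨y', hy'⟩
    simpa using congrArg Subtype.val this
  have hprime : P.IsPrime := by
    refine ⟨?_, ?_⟩
    · intro htop
      refine hnot 1 (fun y hy => ⟨y, hy, by simp⟩) (htop ▸ Submodule.mem_top)
    · intro r s hrs
      by_contra hcon
      push Not at hcon
      have hr := (hsec r).resolve_left hcon.1
      have hs := (hsec s).resolve_left hcon.2
      refine hnot (r * s) ?_ hrs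
      intro y hy
      obtain ⟨y1, hy1, rfl⟩ := hr y hy
      obtain ⟨y2, hy2, rfl⟩ := hs y1 hy1
      exact ⟨y2, hy2, by rw [mul_smul]⟩
  refine ⟨{P}, by simpa using hprime, fun x hx => ?_⟩
  rcases hx P (Finset.mem_singleton_self _) with h | h
  · obtain ⟨k, hk⟩ := Ideal.exists_pow_le_of_le_radical_of_fg h (IsNoetherian.noetherian a)
    refine ⟨k, fun y hy => ⟨0, y, fun r hr => ?_, by simp⟩⟩
    have := Module.mem_annihilator.1 (hk hr) ⟨y, hy⟩
    simpa using congrArg Subtype.val this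
  · refine ⟨0, fun y hy => ?_⟩
    obtain ⟨y', _, h⟩ := (hsec x).resolve_left h y hy
    exact ⟨y', 0, zero_mem _, by simpa using h⟩

/-- principal case of Melkersson's artinian criterion -/
lemma artinian_principal (x : R) (ht : ∀ y : X, ∃ k : ℕ, x ^ k • y = 0)
    (h : IsArtinian R (LinearMap.ker (LinearMap.lsmul R X x))) : IsArtinian R X := by
  rw [← monotone_stabilizes_iff_artinian]
  intro c
  let D : ℕ → Submodule R X := fun j => OrderDual.ofDual (c j)
  have hD : ∀ i j, i ≤ j → D j ≤ D i := fun i j hij => c.monotone hij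
  let K := LinearMap.ker (LinearMap.lsmul R X x)
  let V : ℕ → ℕ → Submodule R K := fun i j => ((D j).map (LinearMap.lsmul R X (x ^ i))).comap K.subtype
  have hV : ∀ i i' j j', i ≤ i' → j ≤ j' → V i' j' ≤ V i j := by
    intro i i' j j' hi hj
    apply Submodule.comap_mono
    obtain ⟨d, rfl⟩ := Nat.exists_eq_add_of_le hi
    rintro _ ⟨y, hy, rfl⟩
    refine ⟨x ^ d • y, (D j).smul_mem _ (hD _ _ hj hy), ?_⟩
    simp only [LinearMap.lsmul_apply, pow_add, mul_smul]
  -- diagonal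
  obtain ⟨n0, hn0⟩ := IsArtinian.monotone_stabilizes (R := R) (M := K)
    ⟨fun n => OrderDual.toDual (V n n), fun i j hij => hV i j i j hij hij⟩
  have hrow : ∀ i, ∃ n, ∀ m, n ≤ m → V i n = V i m := by
    intro i
    exact IsArtinian.monotone_stabilizes (R := R) (M := K)
      ⟨fun n => OrderDual.toDual (V i n), fun p q hpq => hV i i p q le_rfl hpq⟩
  choose nr hnr using hrow
  let N := n0 + (Finset.range n0).sup nr
  have hdiag : ∀ m, n0 ≤ m → V n0 n0 = V m m := fun m hm => hn0 m hm
  have hconst : ∀ i m, N ≤ m → V i m = V i (m+1) := by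
    intro i m hm
    by_cases hi : i < n0
    · have : nr i ≤ N := (Finset.le_sup (f := nr) (Finset.mem_range.2 hi)).trans (Nat.le_add_left _ _)
      rw [← hnr i m (this.trans hm), ← hnr i (m+1) (by omega)]
    · push Not at hi
      have hm0 : n0 ≤ m := (Nat.le_add_right _ _).trans hm
      have key : ∀ j, n0 ≤ j → V i j = V n0 n0 := by
        intro j hj
        refine le_antisymm (hV _ _ _ _ hi hj) ?_
        rw [hdiag (i + j) (by omega)]
        exact hV _ _ _ _ (by omega) (by omega)
      rw [key m hm0, key (m+1) (by omega)]
  have hstep : ∀ m, N ≤ m → D m ≤ D (m+1) := by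
    intro m hm
    have : ∀ k, ∀ y ∈ D m, x ^ k • y = 0 → y ∈ D (m+1) := by
      intro k
      induction k with
      | zero => intro y _ h; simp at h; rw [h]; exact zero_mem _
      | succ k ih =>
        intro y hy h
        have hk : x ^ k • y ∈ K := by
          change x • x ^ k • y = 0
          rw [← mul_smul, ← pow_succ', h]
        have h1 : (⟨_, hk⟩ : K) ∈ V k m := ⟨y, hy, rfl⟩
        rw [hconst k m hm] at h1
        obtain ⟨z, hz, hzy⟩ := h1
        have hzy' : x ^ k • z = x ^ k • y := hzy
        have h2 := ih (y - z) (sub_mem hy (hD m (m+1) (by omega) hz)) (by rw [smul_sub, hzy', sub_self])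
        simpa using add_mem h2 hz
    intro y hy
    obtain ⟨k, hk⟩ := ht y
    exact this k y hy hk
  refine ⟨N, fun m hm => ?_⟩
  have : ∀ d, D N = D (N + d) := by
    intro d
    induction d with
    | zero => rfl
    | succ d ih => exact ih.trans (le_antisymm (hstep _ (by omega)) (hD _ _ (by omega)))
  obtain ⟨d, rfl⟩ := Nat.exists_eq_add_of_le hm
  exact this d

lemma artinian_of_span (s : Finset R) (ht : ∀ r ∈ s, ∀ y : X, ∃ k : ℕ, r ^ k • y = 0)
    (h : IsArtinian R (ann0 (Ideal.span (s : Set R)) X)) : IsArtinian R X := by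
  classical
  induction s using Finset.induction_on generalizing X with
  | empty =>
    have : ann0 (Ideal.span ((∅ : Finset R) : Set R)) X = ⊤ := by
      rw [eq_top_iff]
      intro x _ r hr
      simp at hr
      simp [hr]
    rw [this] at h
    exact isArtinian_of_linearEquiv (Submodule.topEquiv (R := R) (M := X))
  | insert x s hx ih =>
    apply artinian_principal x (ht x (Finset.mem_insert_self _ _))
    apply ih
    · intro r hr y
      obtain ⟨k, hk⟩ := ht r (Finset.mem_insert_of_mem hr) y
      exact ⟨k, Subtype.ext hk⟩
    · let f : ann0 (Ideal.span (s : Set R)) (LinearMap.ker (LinearMap.lsmul R X x)) →ₗ[R] X :=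
        (LinearMap.ker (LinearMap.lsmul R X x)).subtype ∘ₗ Submodule.subtype _
      refine isArtinian_of_injective (f.codRestrict (ann0 (Ideal.span ((insert x s : Finset R) : Set R)) X) ?_) ?_
      · intro c r hr
        rw [Finset.coe_insert, Ideal.mem_span_insert] at hr
        obtain ⟨b, z, hz, rfl⟩ := hr
        have h1 : x • (f c) = 0 := c.1.2
        have h2 : z • (f c) = 0 := congrArg Subtype.val (c.2 z hz)
        rw [add_smul, mul_smul, h1, h2, smul_zero, add_zero]
      · intro c d hcd
        have : f c = f d := by
          have h := Subtype.ext_iff.1 hcd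
          exact h
        exact Subtype.ext (Subtype.ext this)

lemma artinian_of_ann0 [IsNoetherianRing R] (a : Ideal R) (ht : Tors a X) (h : IsArtinian R (ann0 a X)) :
    IsArtinian R X := by
  obtain ⟨s, rfl⟩ := IsNoetherian.noetherian a
  refine artinian_of_span s ?_ h
  intro r hr y
  obtain ⟨k, hk⟩ := ht y
  exact ⟨k, hk _ (Ideal.pow_mem_pow (Ideal.subset_span hr) k)⟩

lemma artinian_of_finite [IsNoetherianRing R] [Module.Finite R X]
    (h : ∀ p ∈ Module.support R X, p.asIdeal.IsMaximal) : IsArtinian R X := by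
  let I := Module.annihilator R X
  have : Ring.KrullDimLE 0 (R ⧸ I) := by
    rw [Ring.krullDimLE_zero_iff]
    intro q hq
    have hp : (q.comap (Ideal.Quotient.mk I)).IsPrime := inferInstance
    have hm := h ⟨_, hp⟩ (by
      rw [Module.support_eq_zeroLocus]
      intro r hr
      change Ideal.Quotient.mk I r ∈ q
      rw [Ideal.Quotient.eq_zero_iff_mem.2 hr]
      exact zero_mem _)
    have := Ideal.map_eq_top_or_isMaximal_of_surjective (Ideal.Quotient.mk I) Ideal.Quotient.mk_surjective hm
    change Ideal.map _ (Ideal.comap _ q) = ⊤ ∨ Ideal.IsMaximal (Ideal.map _ (Ideal.comap _ q)) at this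
    rw [Ideal.map_comap_of_surjective _ Ideal.Quotient.mk_surjective] at this
    exact this.resolve_left hq.ne_top
  have : IsArtinianRing (R ⧸ I) := IsNoetherianRing.isArtinianRing_of_krullDimLE_zero
  have hA : IsArtinian R (R ⧸ I) :=
    isArtinian_of_surjective_algebraMap (R := R ⧸ I) (M := R ⧸ I) (S := R) Ideal.Quotient.mk_surjective
  obtain ⟨n, s, hs⟩ := Module.Finite.exists_fin (R := R) (M := X)
  let f : (Fin n → R ⧸ I) →ₗ[R] X := ∑ i : Fin n,
    (Submodule.liftQ I (LinearMap.toSpanSingleton R X (s i))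
      (fun r hr => by simpa using Module.mem_annihilator.1 hr (s i))) ∘ₗ LinearMap.proj i
  refine isArtinian_of_surjective (Fin n → R ⧸ I) f ?_
  rw [← LinearMap.range_eq_top, eq_top_iff, ← hs, Submodule.span_le]
  rintro _ ⟨i, rfl⟩
  refine ⟨Pi.single i (Submodule.Quotient.mk 1), ?_⟩
  rw [LinearMap.sum_apply, Finset.sum_eq_single i]
  · rw [LinearMap.comp_apply, LinearMap.proj_apply, Pi.single_eq_same]
    erw [Submodule.liftQ_apply]
    simp
  · intro j _ hj
    rw [LinearMap.comp_apply, LinearMap.proj_apply, Pi.single_eq_of_ne hj, map_zero]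
  · simp
end Alg
end Cofin

set_option linter.unusedSectionVars false
namespace Cofin
section Alg2
variable {R : Type u} [CommRing R] [IsNoetherianRing R]
variable {X : Type u} [AddCommGroup X] [Module R X]

lemma fg_of_le {N N' : Submodule R X} (h : N ≤ N') (h' : N'.FG) : N.FG := by
  have := isNoetherian_of_fg_of_noetherian N' h'
  exact isNoetherian_submodule.1 this N h

lemma ann0_pow_fg (a : Ideal R) (h : (ann0 a X).FG) (k : ℕ) : (ann0 (a ^ k) X).FG := by
  induction k with
  | zero =>
    refine fg_of_le (N' := ⊥) ?_ Submodule.fg_bot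
    intro x hx
    simpa using hx 1 (by simp)
  | succ k ih =>
    obtain ⟨s, hs⟩ := IsNoetherian.noetherian a
    let φ : X →ₗ[R] (s → X) := LinearMap.pi fun r => LinearMap.lsmul R X r.1
    have hmem : ∀ r ∈ s, r ∈ a := fun r hr => hs ▸ Ideal.subset_span hr
    refine Submodule.fg_of_fg_map_of_fg_inf_ker φ ?_ ?_
    · refine fg_of_le (N' := Submodule.pi Set.univ fun _ => ann0 (a ^ k) X) ?_ (Submodule.fg_pi fun _ => ih)
      rintro _ ⟨y, hy, rfl⟩ r _ c hc
      change c • r.1 • y = 0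
      rw [← mul_smul]
      exact hy _ (by rw [pow_succ]; exact Ideal.mul_mem_mul hc (hmem _ r.2))
    · refine fg_of_le (N' := ann0 a X) ?_ h
      rintro y ⟨_, hy⟩ r hr
      have hle : a ≤ Module.annihilator R (Submodule.span R {y}) := by
        rw [← hs]
        refine Ideal.span_le.2 fun c hc => ?_
        have : c • y = 0 := congrFun hy ⟨c, hc⟩
        change c ∈ Module.annihilator R (Submodule.span R {y})
        rw [Submodule.mem_annihilator_span_singleton]
        exact this
      exact (Submodule.mem_annihilator_span_singleton _ _).1 (hle hr)

lemma loc_ann (S : Submonoid R) (b : Ideal R) (v : LocalizedModule S X) (h : ∀ r ∈ b, r • v = 0) :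
    ∃ s ∈ S, ∃ n ∈ ann0 b X, s • v = LocalizedModule.mkLinearMap S X n := by
  obtain ⟨⟨m, s0⟩, hm⟩ := IsLocalizedModule.surj S (LocalizedModule.mkLinearMap S X) v
  obtain ⟨g, hg⟩ := IsNoetherian.noetherian b
  have key : ∀ F : Finset R, (∀ r ∈ F, r ∈ b) → ∃ s ∈ S, ∀ r ∈ F, r • s • m = 0 := by
    classical
    intro F
    induction F using Finset.induction_on with
    | empty => exact fun _ => ⟨1, one_mem _, by simp⟩
    | insert x F hx ih =>
      intro hF
      obtain ⟨s, hs, h1⟩ := ih fun r hr => hF r (Finset.mem_insert_of_mem hr)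
      have hx0 : LocalizedModule.mkLinearMap S X (x • m) = 0 := by
        rw [map_smul]
        have : (s0 : R) • v = LocalizedModule.mkLinearMap S X m := hm
        rw [← this, smul_comm, h x (hF x (Finset.mem_insert_self _ _)), smul_zero]
      rw [IsLocalizedModule.eq_zero_iff S] at hx0
      obtain ⟨c, hc⟩ := hx0
      have hc' : (c : R) • x • m = 0 := hc
      refine ⟨c * s, mul_mem c.2 hs, fun r hr => ?_⟩
      rcases Finset.mem_insert.1 hr with rfl | hr
      · rw [mul_comm, mul_smul, smul_comm r, smul_comm r, hc', smul_zero]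
      · rw [mul_smul, smul_comm r, h1 r hr, smul_zero]
  obtain ⟨s, hs, h1⟩ := key g fun r hr => hg ▸ Ideal.subset_span hr
  refine ⟨s * s0, mul_mem hs s0.2, s • m, ?_, ?_⟩
  · intro r hr
    have hle : b ≤ Module.annihilator R (Submodule.span R {s • m}) := by
      rw [← hg]
      refine Ideal.span_le.2 fun c hc => ?_
      exact (Submodule.mem_annihilator_span_singleton _ _).2 (h1 c hc)
    exact (Submodule.mem_annihilator_span_singleton _ _).1 (hle hr)
  · have : (s0 : R) • v = LocalizedModule.mkLinearMap S X m := hm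
    rw [mul_smul, this, map_smul]

lemma lemG (a : Ideal R) (S : Submonoid R) (ht : Tors a X) (hfg : (ann0 a X).FG)
    (good : ∀ p ∈ Module.support R X, ∀ q : PrimeSpectrum R, p ≤ q →
      Disjoint (S : Set R) (q.asIdeal : Set R) → q = p) :
    ∃ x ∈ a, ∃ N : Submodule R X, N.FG ∧ ∀ m : X, ∃ s ∈ S, ∃ z : X, ∃ n ∈ N, s • m = x • z + n := by
  classical
  let R' := Localization S
  let X' := LocalizedModule S X
  let f : X →ₗ[R] X' := LocalizedModule.mkLinearMap S X
  let a' : Ideal R' := a.map (algebraMap R R')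
  have hN : IsNoetherianRing R' := IsLocalization.isNoetherianRing S R' inferInstance
  have hann : ∀ (k : ℕ) (v : X'), v ∈ ann0 (a' ^ k) X' → ∀ r ∈ a ^ k, r • v = 0 := by
    intro k v hv r hr
    rw [← algebraMap_smul R' r v]
    refine hv _ ?_
    rw [← Ideal.map_pow]
    exact Ideal.mem_map_of_mem _ hr
  have ht' : Tors a' X' := by
    intro v
    obtain ⟨⟨m, s0⟩, hm⟩ := IsLocalizedModule.surj S f v
    obtain ⟨k, hk⟩ := ht m
    refine ⟨k, fun r hr => ?_⟩
    have hle : a' ^ k ≤ Module.annihilator R' (Submodule.span R' {v}) := by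
      rw [← Ideal.map_pow, Ideal.map_le_iff_le_comap]
      intro c hc
      refine (Submodule.mem_annihilator_span_singleton _ _).2 ?_
      rw [algebraMap_smul]
      have h1 : s0 • (c • v) = s0 • (0 : X') := by
        rw [smul_comm, hm, ← map_smul, hk c hc, map_zero, smul_zero]
      exact IsLocalizedModule.smul_injective f s0 h1
    exact (Submodule.mem_annihilator_span_singleton _ _).1 (hle hr)
  have hunit : ∀ s ∈ S, IsUnit (algebraMap R R' s) := fun s hs => IsLocalization.map_units R' ⟨s, hs⟩
  have hfg' : (ann0 a' X').FG := by
    obtain ⟨g, hg⟩ := hfg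
    refine fg_of_le (N' := Submodule.span R' (f '' g)) ?_ (Submodule.fg_span (g.finite_toSet.image _))
    intro v hv
    obtain ⟨s, hs, n, hn, h⟩ := loc_ann S a v (fun r hr => by
      have := hann 1 v (by simpa using hv) r (by simpa using hr)
      exact this)
    have h1 : f n ∈ Submodule.span R' (f '' g) := by
      rw [← hg] at hn
      have : Submodule.span R (g : Set X) ≤ ((Submodule.span R' (f '' g)).restrictScalars R).comap f :=
        Submodule.span_le.2 fun y hy => Submodule.subset_span ⟨y, hy, rfl⟩
      exact this hn
    rw [← h, ← algebraMap_smul R' s v] at h1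
    exact (Submodule.smul_mem_iff_of_isUnit _ (hunit s hs)).1 h1
  have hart : IsArtinian R' (ann0 a' X') := by
    have := Module.Finite.iff_fg.2 hfg'
    apply artinian_of_finite
    intro P hP
    have hP1 : P ∈ Module.support R' X' :=
      Module.support_subset_of_injective (ann0 a' X').subtype (Submodule.injective_subtype _) hP
    obtain ⟨v, hv⟩ := Module.mem_support_iff'.1 hP1
    obtain ⟨⟨m, s0⟩, hm⟩ := IsLocalizedModule.surj S f v
    have hp : PrimeSpectrum.comap (algebraMap R R') P ∈ Module.support R X := by
      refine Module.mem_support_iff'.2 ⟨m, fun r hr h0 => ?_⟩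
      refine hv (algebraMap R R' r) hr ?_
      rw [algebraMap_smul]
      have h1 : s0 • (r • v) = s0 • (0 : X') := by
        rw [smul_comm, hm, ← map_smul, h0, map_zero, smul_zero]
      exact IsLocalizedModule.smul_injective f s0 h1
    obtain ⟨Q, hQ, hPQ⟩ := Ideal.exists_le_maximal P.asIdeal P.2.ne_top
    have hQp : Q.IsPrime := hQ.isPrime
    have := good _ hp (PrimeSpectrum.comap (algebraMap R R') ⟨Q, hQp⟩) (Ideal.comap_mono hPQ)
      ((IsLocalization.isPrime_iff_isPrime_disjoint S R' Q).1 hQp).2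
    have h2 : Q.comap (algebraMap R R') = P.asIdeal.comap (algebraMap R R') :=
      congrArg PrimeSpectrum.asIdeal this
    have h3 : Q = P.asIdeal := by
      rw [← IsLocalization.map_under S R' P.asIdeal, ← IsLocalization.map_under S R' Q]
      exact congrArg (Ideal.map _) h2
    rw [← h3]
    exact hQ
  have : IsArtinian R' X' := artinian_of_ann0 a' ht' hart
  obtain ⟨F, hF, hsec⟩ := secondary_aux a' (⊤ : Submodule R' X')
  obtain ⟨x, hxa, hx⟩ : ∃ x ∈ a, ∀ P ∈ F, a' ≤ P ∨ algebraMap R R' x ∉ P := by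
    by_contra hcon
    push Not at hcon
    let F' := F.filter fun P => ¬ a' ≤ P
    have hsub : (a : Set R) ⊆ ⋃ P ∈ (F' : Set (Ideal R')), (P.comap (algebraMap R R') : Ideal R) := by
      intro x hx
      obtain ⟨P, hP, h1, h2⟩ := hcon x hx
      exact Set.mem_biUnion (show P ∈ (F' : Set (Ideal R')) by simp [F', hP, h1]) h2
    rw [Ideal.subset_union_prime ⊥ ⊥] at hsub
    · obtain ⟨P, hP, h⟩ := hsub
      exact (Finset.mem_filter.1 hP).2 (Ideal.map_le_iff_le_comap.2 h)
    · intro P hP _ _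
      have := hF P (Finset.mem_filter.1 hP).1
      infer_instance
  obtain ⟨k, hk⟩ := hsec _ hx
  refine ⟨x, hxa, ann0 (a ^ k) X, ann0_pow_fg a hfg k, fun m => ?_⟩
  obtain ⟨z, n, hn, h⟩ := hk (f m) trivial
  obtain ⟨⟨z0, s1⟩, hz⟩ := IsLocalizedModule.surj S f z
  obtain ⟨s2, hs2, n0, hn0, h2⟩ := loc_ann S (a ^ k) n (hann k n hn)
  have hz' : (s1 : R) • z = f z0 := hz
  have h2' : s2 • n = f n0 := h2
  have h3 : f ((s1 : R) • s2 • m) = f (x • s2 • z0 + (s1 : R) • n0) := by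
    rw [map_smul, map_smul, h, map_add, map_smul, map_smul, map_smul, ← hz', ← h2', algebraMap_smul,
      smul_add, smul_add]
    congr 1
    rw [smul_comm s2 x z, smul_comm (s1 : R) x, smul_comm (s1 : R) s2 z]
  obtain ⟨s3, h4⟩ := (IsLocalizedModule.eq_iff_exists S f).1 h3
  have h4' : (s3 : R) • ((s1 : R) • s2 • m) = (s3 : R) • (x • s2 • z0 + (s1 : R) • n0) := h4
  refine ⟨s3 * s1 * s2, mul_mem (mul_mem s3.2 s1.2) hs2, (s3 : R) • s2 • z0, (s3 : R) • (s1 : R) • n0,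
    Submodule.smul_mem _ _ (Submodule.smul_mem _ _ hn0), ?_⟩
  rw [mul_smul, mul_smul, h4', smul_add, smul_comm x (s3 : R)]

end Alg2
end Cofin

set_option linter.unusedSectionVars false
namespace Cofin
section Dim
variable {R : Type u} [CommRing R] [IsNoetherianRing R]
variable {X : Type u} [AddCommGroup X] [Module R X]
variable {Y : Type u} [AddCommGroup Y] [Module R Y]

lemma ext_smul_zero (a : Ideal R) (Z : ModuleCat.{u} R) (i : ℕ) {r : R} (hr : r ∈ a)
    (y : Abelian.Ext.{u} (ModuleCat.of R (R ⧸ a)) Z i) : r • y = 0 := by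
  have h : r • (𝟙 (ModuleCat.of R (R ⧸ a))) = 0 := by
    refine ModuleCat.hom_ext (LinearMap.ext fun x => ?_)
    obtain ⟨c, rfl⟩ := Ideal.Quotient.mk_surjective x
    change r • Ideal.Quotient.mk a c = 0
    rw [Algebra.smul_def, Ideal.Quotient.algebraMap_eq, Ideal.Quotient.eq_zero_iff_mem.2 hr, zero_mul]
  have h2 : r • y = (Abelian.Ext.mk₀ (r • (𝟙 (ModuleCat.of R (R ⧸ a))))).comp y (zero_add i) := by
    rw [Abelian.Ext.mk₀_smul, Abelian.Ext.smul_comp, Abelian.Ext.mk₀_id_comp]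
  rw [h2, h, Abelian.Ext.mk₀_zero, Abelian.Ext.zero_comp]

lemma exact_sub_quot (N : Submodule R X) : Function.Exact N.subtype N.mkQ :=
  fun x => by simp

lemma exact_ker_range (f : X →ₗ[R] Y) : Function.Exact (LinearMap.ker f).subtype f.rangeRestrict :=
  fun x => by
    constructor
    · intro h
      exact ⟨⟨x, Subtype.ext_iff.1 h⟩, rfl⟩
    · rintro ⟨y, rfl⟩
      exact Subtype.ext y.2

lemma key_ext (a : Ideal R) {x : R} (hx : x ∈ a)
    (hK : ∀ i, Fin' a i (LinearMap.ker (LinearMap.lsmul R X x)))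
    (hQ : ∀ i, Fin' a i (X ⧸ LinearMap.range (LinearMap.lsmul R X x)))
    (h0 : Fin' a 0 X) : ∀ i, Fin' a i X := by
  intro i
  cases i with
  | zero => exact h0
  | succ i =>
    let φ := LinearMap.lsmul R X x
    let hs1 := sc_exact (Submodule.injective_subtype _) φ.surjective_rangeRestrict (exact_ker_range φ)
    let hs2 := sc_exact (Submodule.injective_subtype _) (Submodule.mkQ_surjective _)
      (exact_sub_quot (LinearMap.range φ))
    have hK' := hK (i+1)
    have hQ' := hQ i
    unfold Fin' at hK' hQ' ⊢
    let A := ModuleCat.of R (R ⧸ a)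
    let P := (Abelian.Ext.mk₀ (ModuleCat.ofHom φ.rangeRestrict)).postcompOfLinear R A (add_zero (i+1))
    let ι := (Abelian.Ext.mk₀ (ModuleCat.ofHom (LinearMap.range φ).subtype)).postcompOfLinear R A (add_zero (i+1))
    let δ := hs2.extClass.postcompOfLinear R A (rfl : i + 1 = i + 1)
    have hcomp : ∀ y, ι (P y) = 0 := by
      intro y
      have h1 : ι (P y) = y.comp (Abelian.Ext.mk₀ (x • 𝟙 (ModuleCat.of R X))) (add_zero (i+1)) := by
        change (y.comp (Abelian.Ext.mk₀ _) (add_zero (i+1))).comp (Abelian.Ext.mk₀ _) (add_zero (i+1)) = _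
        rw [Abelian.Ext.comp_assoc _ _ _ (add_zero _) (add_zero _) (by omega), Abelian.Ext.mk₀_comp_mk₀]
        rfl
      rw [h1, ← Abelian.Ext.smul_eq_comp_mk₀]
      exact ext_smul_zero a _ _ hx y
    have hP : ∀ y, P y ∈ LinearMap.range δ := by
      intro y
      obtain ⟨z, hz⟩ := Abelian.Ext.covariant_sequence_exact₁ _ hs2 (P y) (hcomp y) rfl
      exact ⟨z, hz⟩
    exact finite_of_exact
      (f := (Abelian.Ext.mk₀ (ModuleCat.ofHom (LinearMap.ker φ).subtype)).postcompOfLinear R A (add_zero (i+1)))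
      (g := P.codRestrict (LinearMap.range δ) hP)
      (fun b hb => Abelian.Ext.covariant_sequence_exact₂ _ hs1 b (Subtype.ext_iff.1 hb))

lemma Tors.of_inj {a : Ideal R} (f : X →ₗ[R] Y) (hf : Function.Injective f) (h : Tors a Y) : Tors a X := by
  intro x
  obtain ⟨k, hk⟩ := h (f x)
  exact ⟨k, fun r hr => hf (by rw [map_smul, hk r hr, map_zero])⟩

lemma Tors.of_surj {a : Ideal R} (f : X →ₗ[R] Y) (hf : Function.Surjective f) (h : Tors a X) : Tors a Y := by
  intro y
  obtain ⟨x, rfl⟩ := hf y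
  obtain ⟨k, hk⟩ := h x
  exact ⟨k, fun r hr => by rw [← map_smul, hk r hr, map_zero]⟩

/-- kernel of x on `ann0 b` -/
noncomputable def annEquiv (b : Ideal R) (x : R) :
    ann0 (b ⊔ Ideal.span {x}) X ≃ₗ[R] LinearMap.ker (LinearMap.lsmul R (ann0 b X) x) where
  toFun y := ⟨⟨y.1, fun r hr => y.2 r (Ideal.mem_sup_left hr)⟩,
    Subtype.ext (y.2 x (Ideal.mem_sup_right (Ideal.mem_span_singleton_self x)))⟩
  map_add' _ _ := rfl
  map_smul' _ _ := rfl
  invFun y := ⟨y.1.1, fun r hr => by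
    obtain ⟨c, hc, d, hd, rfl⟩ := Submodule.mem_sup.1 hr
    obtain ⟨e, rfl⟩ := Ideal.mem_span_singleton'.1 hd
    have h1 : c • y.1.1 = 0 := y.1.2 c hc
    have h2 : x • y.1.1 = 0 := Subtype.ext_iff.1 y.2
    rw [add_smul, mul_smul, h1, h2, smul_zero, add_zero]⟩
  left_inv _ := rfl
  right_inv _ := rfl

lemma lt_sup_span {b : Ideal R} {x : R} (hx : x ∉ b) : b < b ⊔ Ideal.span {x} :=
  lt_of_le_of_ne le_sup_left fun h => hx (h ▸ Ideal.mem_sup_right (Ideal.mem_span_singleton_self x))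

noncomputable def annBot : ann0 (⊥ : Ideal R) X ≃ₗ[R] X :=
  LinearEquiv.ofBijective (Submodule.subtype _) ⟨Submodule.injective_subtype _, fun x =>
    ⟨⟨x, fun r hr => by rw [(Submodule.mem_bot R).1 hr, zero_smul]⟩, rfl⟩⟩

/-- dimension zero criterion -/
lemma dim0 (a : Ideal R) (ht : Tors a X) (hmax : ∀ p ∈ Module.support R X, p.asIdeal.IsMaximal)
    (h0 : Fin' a 0 X) : ∀ i, Fin' a i X := by
  have main : ∀ b : Ideal R, ∀ i, Fin' a i (ann0 b X) := by
    intro b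
    induction b using WellFoundedGT.induction with
    | ind b ih =>
    have hL0 : Fin' a 0 (ann0 b X) := Fin'.left_zero a (Submodule.injective_subtype _) h0
    have htL : Tors a (ann0 b X) := Tors.of_inj _ (Submodule.injective_subtype _) ht
    obtain ⟨x, hxa, N, hN, h⟩ := lemG a ⊥ htL ((fin_zero_iff a _).1 hL0) (by
      intro p hp q hpq _
      have := hmax p (Module.support_subset_of_injective _ (Submodule.injective_subtype (ann0 b X)) hp)
      exact PrimeSpectrum.ext (this.eq_of_le q.2.ne_top hpq).symm)
    have h' : ∀ m, ∃ z, ∃ n ∈ N, m = x • z + n := by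
      intro m
      obtain ⟨s, hs, z, n, hn, e⟩ := h m
      rw [Submonoid.mem_bot.1 hs, one_smul] at e
      exact ⟨z, n, hn, e⟩
    have hNf := Module.Finite.iff_fg.2 hN
    by_cases hxb : x ∈ b
    · have : Module.Finite R (ann0 b X) := by
        refine Module.Finite.of_surjective N.subtype fun m => ?_
        obtain ⟨z, n, hn, e⟩ := h' m
        have hz : x • z = 0 := Subtype.ext (z.2 x hxb)
        rw [hz, zero_add] at e
        exact ⟨⟨n, hn⟩, e.symm⟩
      exact fun i => Fin'.of_finite a _ i
    · refine key_ext a hxa (fun i => Fin'.congr a (annEquiv b x) (ih _ (lt_sup_span hxb) i)) ?_ hL0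
      have : Module.Finite R (ann0 b X ⧸ LinearMap.range (LinearMap.lsmul R (ann0 b X) x)) := by
        refine Module.Finite.of_surjective (Submodule.mkQ _ ∘ₗ N.subtype) fun m => ?_
        obtain ⟨m, rfl⟩ := Submodule.mkQ_surjective _ m
        obtain ⟨z, n, hn, e⟩ := h' m
        refine ⟨⟨n, hn⟩, ?_⟩
        rw [e]
        change Submodule.mkQ _ n = _
        rw [map_add]
        have : Submodule.mkQ (LinearMap.range (LinearMap.lsmul R (ann0 b X) x)) (x • z) = 0 := by
          rw [Submodule.mkQ_apply, Submodule.Quotient.mk_eq_zero]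
          exact ⟨z, rfl⟩
        rw [this, zero_add]
      exact fun i => Fin'.of_finite a _ i
  exact fun i => Fin'.congr a annBot (main ⊥ i)

lemma quotLemma (a : Ideal R) (ht : Tors a X) (N : Submodule R X) (hN : N.FG)
    (hmax : ∀ p ∈ Module.support R (X ⧸ N), p.asIdeal.IsMaximal)
    (h0 : Fin' a 0 X) : ∀ i, Fin' a i X := by
  have hNf := Module.Finite.iff_fg.2 hN
  have hQ := dim0 a (ht.of_surj N.mkQ N.mkQ_surjective) hmax
    (Fin'.right a N.injective_subtype N.mkQ_surjective (exact_sub_quot N) h0 (Fin'.of_finite a _ _))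
  exact fun i => Fin'.mid a N.injective_subtype N.mkQ_surjective (exact_sub_quot N) (Fin'.of_finite a _ _) (hQ i)

/-- support of dimension at most one -/
def D1 (R : Type u) [CommRing R] (X : Type u) [AddCommGroup X] [Module R X] : Prop :=
  ∀ p ∈ Module.support R X, ∀ q r : PrimeSpectrum R, p < q → q < r → False

lemma D1.of_dim (h : Order.krullDim (Module.support R X) ≤ 1) : D1 R X := by
  intro p hp q r hpq hqr
  have hq := Module.mem_support_mono hpq.le hp
  have hr := Module.mem_support_mono hqr.le hq
  let s : LTSeries (Module.support R X) := ⟨2, ![⟨p, hp⟩, ⟨q, hq⟩, ⟨r, hr⟩], by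
    intro i
    fin_cases i
    · exact hpq
    · exact hqr⟩
  have h1 := (Order.LTSeries.length_le_krullDim s).trans h
  have h2 : s.length = 2 := rfl
  rw [h2] at h1
  exact absurd h1 (by decide)

lemma good_of_D1 (a : Ideal R) (ht : Tors a X) (hfg : (ann0 a X).FG) (hd : D1 R X) :
    ∃ S : Submonoid R, (∀ p ∈ Module.support R X, ∀ q : PrimeSpectrum R, p ≤ q →
      Disjoint (S : Set R) (q.asIdeal : Set R) → q = p) ∧
      ∀ p ∈ Module.support R X, ¬ p.asIdeal.IsMaximal → Disjoint (S : Set R) (p.asIdeal : Set R) := by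
  classical
  have hlt : ∀ p : PrimeSpectrum R, ¬ p.asIdeal.IsMaximal → ∃ m, p < m := by
    intro p hp
    obtain ⟨m, hm, hpm⟩ := Ideal.exists_le_maximal p.asIdeal p.2.ne_top
    refine ⟨⟨m, hm.isPrime⟩, lt_of_le_of_ne hpm fun e => hp ?_⟩
    rw [e]; exact hm
  let T : Set (Ideal R) := {I | ∃ p ∈ Module.support R X, ¬ p.asIdeal.IsMaximal ∧ p.asIdeal = I}
  have hT : T.Finite := by
    have := Module.Finite.iff_fg.2 hfg
    refine (associatedPrimes.finite R (ann0 a X)).subset ?_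
    rintro _ ⟨p, hp, hpm, rfl⟩
    obtain ⟨m, hm⟩ := hlt p hpm
    obtain ⟨x, hx⟩ := Module.mem_support_iff'.1 hp
    have hmin : p.asIdeal ∈ (Module.annihilator R (Submodule.span R {x})).minimalPrimes := by
      refine ⟨⟨p.2, ?_⟩, ?_⟩
      · intro r hr
        by_contra hrp
        exact hx r hrp ((Submodule.mem_annihilator_span_singleton _ _).1 hr)
      · rintro q ⟨hq, hq1⟩ hqp
        by_contra hne
        refine hd ⟨q, hq⟩ ?_ p m (lt_of_le_of_ne hqp fun e => hne ?_) hm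
        · refine Module.mem_support_iff'.2 ⟨x, fun r hr h0 => hr (hq1 ?_)⟩
          exact (Submodule.mem_annihilator_span_singleton _ _).2 h0
        · rw [← e]
    have h1 := Module.associatedPrimes.minimalPrimes_annihilator_subset_associatedPrimes R (Submodule.span R {x}) hmin
    have h2 := associatedPrimes.subset_of_injective (Submodule.injective_subtype (Submodule.span R {x})) h1
    obtain ⟨hpp, y, hy⟩ := isAssociatedPrime_iff.1 h2
    have hy' : ∀ r, r ∈ p.asIdeal ↔ r • y = 0 := by
      intro r; rw [hy]; simp [Submodule.mem_colon_singleton]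
    obtain ⟨k, hk⟩ := ht y
    have hya : y ∈ ann0 a X := by
      intro r hr
      exact (hy' r).1 (hpp.mem_of_pow_mem k ((hy' _).2 (hk _ (Ideal.pow_mem_pow hr k))))
    refine isAssociatedPrime_iff.2 ⟨hpp, ⟨y, hya⟩, ?_⟩
    ext r
    rw [hy', Submodule.mem_colon_singleton, Submodule.mem_bot]
    exact (Subtype.ext_iff (a1 := (r • (⟨y, hya⟩ : ann0 a X))) (a2 := 0)).symm
  have hTp : ∀ I ∈ T, I.IsPrime := by rintro _ ⟨p, _, _, rfl⟩; exact p.2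
  let S : Submonoid R :=
    { carrier := {s | ∀ I ∈ T, s ∉ I}
      one_mem' := fun I hI h1 => (hTp I hI).ne_top ((Ideal.eq_top_iff_one _).2 h1)
      mul_mem' := fun {s t} hs ht I hI h1 => by
        rcases (hTp I hI).mem_or_mem h1 with h | h
        · exact hs I hI h
        · exact ht I hI h }
  refine ⟨S, ?_, ?_⟩
  · intro p hp q hpq hdisj
    by_contra hne
    have hsub : (q.asIdeal : Set R) ⊆ ⋃ I ∈ (hT.toFinset : Set (Ideal R)), (I : Set R) := by
      intro s hs
      by_contra hcon
      refine Set.disjoint_left.1 hdisj (?_ : s ∈ S) hs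
      intro I hI hsI
      exact hcon (Set.mem_biUnion (by simpa using hI) hsI)
    rw [Ideal.subset_union_prime (f := fun I => I) ⊥ ⊥ (fun I hI _ _ => hTp I (by simpa using hI))] at hsub
    obtain ⟨I, hI, hqI⟩ := hsub
    obtain ⟨p1, hp1, hpm1, rfl⟩ := (by simpa using hI : I ∈ T)
    obtain ⟨m, hm⟩ := hlt p1 hpm1
    exact hd p hp q m (lt_of_le_of_ne hpq (Ne.symm hne)) (lt_of_le_of_lt hqI hm)
  · intro p hp hpm
    rw [Set.disjoint_left]
    intro s hs hsp
    exact hs _ ⟨p, hp, hpm, rfl⟩ hsp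

lemma dim1 (a : Ideal R) (ht : Tors a X) (hd : D1 R X)
    (h0 : Fin' a 0 X) (h1 : Fin' a 1 X) : ∀ i, Fin' a i X := by
  have main : ∀ b : Ideal R, Fin' a 0 (ann0 b X) → Fin' a 1 (ann0 b X) → ∀ i, Fin' a i (ann0 b X) := by
    intro b
    induction b using WellFoundedGT.induction with
    | ind b ih =>
    intro hL0 hL1
    have htL : Tors a (ann0 b X) := Tors.of_inj _ (Submodule.injective_subtype _) ht
    have hdL : D1 R (ann0 b X) := fun p hp =>
      hd p (Module.support_subset_of_injective _ (Submodule.injective_subtype (ann0 b X)) hp)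
    have hfgL := (fin_zero_iff a _).1 hL0
    obtain ⟨S, hS1, hS2⟩ := good_of_D1 a htL hfgL hdL
    obtain ⟨x, hxa, N, hN, h⟩ := lemG a S htL hfgL hS1
    have hmx : ∀ (Q : Type u) [AddCommGroup Q] [Module R Q] (f : ann0 b X →ₗ[R] Q), Function.Surjective f →
        (∀ z, f (x • z) = 0) → (∀ n ∈ N, f n = 0) → ∀ p ∈ Module.support R Q, p.asIdeal.IsMaximal := by
      intro Q _ _ f hf hfx hfN p hp
      by_contra hpm
      have hpL := Module.support_subset_of_surjective f hf hp
      have hdis := hS2 p hpL hpm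
      obtain ⟨y, hy⟩ := Module.mem_support_iff'.1 hp
      obtain ⟨m, rfl⟩ := hf y
      obtain ⟨s, hs, z, n, hn, e⟩ := h m
      refine hy s (fun hsp => Set.disjoint_left.1 hdis hs hsp) ?_
      rw [← map_smul, e, map_add, hfx, hfN n hn, add_zero]
    by_cases hxb : x ∈ b
    · refine quotLemma a htL N hN (hmx _ N.mkQ N.mkQ_surjective ?_ ?_) hL0
      · intro z
        have hz : x • z = 0 := Subtype.ext (z.2 x hxb)
        rw [hz, map_zero]
      · intro n hn
        simpa using hn
    · let φ := LinearMap.lsmul R (ann0 b X) x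
      have e1 := exact_ker_range φ
      have e2 := exact_sub_quot (LinearMap.range φ)
      have i1 := (LinearMap.ker φ).injective_subtype
      have i2 := (LinearMap.range φ).injective_subtype
      have s1 := φ.surjective_rangeRestrict
      have s2 := (LinearMap.range φ).mkQ_surjective
      have hI0 : Fin' a 0 (LinearMap.range φ) := Fin'.left_zero a i2 hL0
      have hK0 : Fin' a 0 (LinearMap.ker φ) := Fin'.left_zero a i1 hL0
      have hK1 : Fin' a 1 (LinearMap.ker φ) := Fin'.left a i1 s1 e1 hI0 hL1
      have hK : ∀ i, Fin' a i (LinearMap.ker φ) := fun i =>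
        Fin'.congr a (annEquiv b x) (ih _ (lt_sup_span hxb) (Fin'.congr a (annEquiv b x).symm hK0)
          (Fin'.congr a (annEquiv b x).symm hK1) i)
      have hI1 : Fin' a 1 (LinearMap.range φ) := Fin'.right a i1 s1 e1 hL1 (hK 2)
      have hQ0 : Fin' a 0 (ann0 b X ⧸ LinearMap.range φ) := Fin'.right a i2 s2 e2 hL0 hI1
      refine key_ext a hxa hK ?_ hL0
      refine quotLemma a (htL.of_surj _ s2) (N.map (LinearMap.range φ).mkQ) (hN.map _)
        (hmx _ ((N.map (LinearMap.range φ).mkQ).mkQ ∘ₗ (LinearMap.range φ).mkQ) 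
          ((Submodule.mkQ_surjective _).comp s2) ?_ ?_) hQ0
      · intro z
        have : (LinearMap.range φ).mkQ (x • z) = 0 := by
          rw [Submodule.mkQ_apply, Submodule.Quotient.mk_eq_zero]
          exact ⟨z, rfl⟩
        rw [LinearMap.comp_apply, this, map_zero]
      · intro n hn
        rw [LinearMap.comp_apply, Submodule.mkQ_apply, Submodule.Quotient.mk_eq_zero]
        exact ⟨n, hn, rfl⟩
  exact fun i => Fin'.congr a annBot (main ⊥ (Fin'.congr a annBot.symm h0) (Fin'.congr a annBot.symm h1) i)

/-- FD property -/
def FD1 (R : Type u) [CommRing R] (X : Type u) [AddCommGroup X] [Module R X] : Prop :=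
  ∃ N : Submodule R X, N.FG ∧ D1 R (X ⧸ N)

lemma FD1.congr (e : X ≃ₗ[R] Y) (h : FD1 R X) : FD1 R Y := by
  obtain ⟨N, hN, hd⟩ := h
  refine ⟨N.map e.toLinearMap, hN.map _, ?_⟩
  intro p hp
  refine hd p ?_
  rw [(Submodule.Quotient.equiv N (N.map e.toLinearMap) e rfl).support_eq]
  exact hp

lemma crit (a : Ideal R) (ht : Tors a X) (hd : FD1 R X)
    (h0 : Fin' a 0 X) (h1 : Fin' a 1 X) : ∀ i, Fin' a i X := by
  obtain ⟨N, hN, hd⟩ := hd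
  have hNf := Module.Finite.iff_fg.2 hN
  have e := exact_sub_quot N
  have i1 := N.injective_subtype
  have s1 := N.mkQ_surjective
  have hQ := dim1 a (ht.of_surj N.mkQ s1) hd
    (Fin'.right a i1 s1 e h0 (Fin'.of_finite a _ _)) (Fin'.right a i1 s1 e h1 (Fin'.of_finite a _ _))
  exact fun i => Fin'.mid a i1 s1 e (Fin'.of_finite a _ _) (hQ i)

end Dim
end Cofin

set_option linter.unusedSectionVars false
namespace Cofin
section Colim
variable {R : Type u} [CommRing R]
variable {E : ℕ → Type u} [∀ k, AddCommGroup (E k)] [∀ k, Module R (E k)]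
variable {E' : ℕ → Type u} [∀ k, AddCommGroup (E' k)] [∀ k, Module R (E' k)]
variable {L : Type u} [AddCommGroup L] [Module R L]
variable {L' : Type u} [AddCommGroup L'] [Module R L']

/-- concrete direct limit -/
structure IsColim (T : ∀ k l, k ≤ l → E k →ₗ[R] E l) (ι : ∀ k, E k →ₗ[R] L) : Prop where
  comp : ∀ k l h x, ι l (T k l h x) = ι k x
  surj : ∀ y, ∃ k x, ι k x = y
  ker : ∀ k x, ι k x = 0 → ∃ l h, T k l h x = 0

lemma IsColim.equiv {T : ∀ k l, k ≤ l → E k →ₗ[R] E l} {ι : ∀ k, E k →ₗ[R] L}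
    {T' : ∀ k l, k ≤ l → E' k →ₗ[R] E' l} {ι' : ∀ k, E' k →ₗ[R] L'}
    (h : IsColim T ι) (h' : IsColim T' ι') (f : ∀ k, E k →ₗ[R] E' k)
    (hT : ∀ k l h x, f l (T k l h x) = T' k l h (f k x))
    (hinj : ∀ k x, f k x = 0 → ∃ l h, T k l h x = 0)
    (hsurj : ∀ k y, ∃ l h x, f l x = T' k l h y) : Nonempty (L ≃ₗ[R] L') := by
  classical
  let Φ : (DirectSum ℕ E) →ₗ[R] L := DirectSum.toModule R ℕ L ι
  let Ψ : (DirectSum ℕ E) →ₗ[R] L' := DirectSum.toModule R ℕ L' fun k => ι' k ∘ₗ f k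
  have hΦ : Function.Surjective Φ := by
    intro y
    obtain ⟨k, x, rfl⟩ := h.surj y
    exact ⟨DirectSum.lof R ℕ E k x, DirectSum.toModule_lof R k x⟩
  have hΨ : Function.Surjective Ψ := by
    intro y
    obtain ⟨k, x, rfl⟩ := h'.surj y
    obtain ⟨l, hl, z, hz⟩ := hsurj k x
    refine ⟨DirectSum.lof R ℕ E l z, (DirectSum.toModule_lof R l z).trans ?_⟩
    rw [LinearMap.comp_apply, hz, h'.comp]
  have hrep : ∀ s : DirectSum ℕ E, ∃ k x, Φ s = ι k x ∧ Ψ s = ι' k (f k x) := by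
    intro s
    induction s using DirectSum.induction_on with
    | zero => exact ⟨0, 0, by simp⟩
    | of k x => exact ⟨k, x, DirectSum.toModule_lof R k x, DirectSum.toModule_lof R k x⟩
    | add s t hs ht =>
      obtain ⟨k, x, h1, h2⟩ := hs
      obtain ⟨l, y, h3, h4⟩ := ht
      refine ⟨k + l, T k (k+l) (by omega) x + T l (k+l) (by omega) y, ?_, ?_⟩
      · rw [map_add, map_add, h.comp, h.comp, h1, h3]
      · rw [map_add, map_add, map_add, hT, hT, h'.comp, h'.comp, h2, h4]
  have hker : LinearMap.ker Φ = LinearMap.ker Ψ := by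
    ext s
    obtain ⟨k, x, h1, h2⟩ := hrep s
    rw [LinearMap.mem_ker, LinearMap.mem_ker, h1, h2]
    constructor
    · intro h0
      obtain ⟨l, hl, h3⟩ := h.ker _ _ h0
      rw [← h'.comp k l hl, ← hT, h3, map_zero, map_zero]
    · intro h0
      obtain ⟨l, hl, h3⟩ := h'.ker _ _ h0
      rw [← hT] at h3
      obtain ⟨m, hm, h4⟩ := hinj _ _ h3
      rw [← h.comp k l hl, ← h.comp l m hm, h4, map_zero]
  exact ⟨(Φ.quotKerEquivOfSurjective hΦ).symm.trans
    ((Submodule.quotEquivOfEq _ _ hker).trans (Ψ.quotKerEquivOfSurjective hΨ))⟩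
end Colim

section LC
variable {R : Type u} [CommRing R] (a : Ideal R)

/-- R/a^k -/
abbrev Qk (k : ℕ) : ModuleCat.{u} R := ModuleCat.of R (R ⧸ a ^ k)

/-- transition -/
noncomputable abbrev trk (k l : ℕ) (h : k ≤ l) : Qk a l ⟶ Qk a k :=
  ModuleCat.ofHom (Submodule.mapQ (a ^ l) (a ^ k) LinearMap.id (Ideal.pow_le_pow_right h))

/-- Ext system -/
abbrev Ek (i : ℕ) (M : Type u) [AddCommGroup M] [Module R M] (k : ℕ) : Type u :=
  Abelian.Ext.{u} (Qk a k) (ModuleCat.of R M) i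

noncomputable def Tk (i : ℕ) (M : Type u) [AddCommGroup M] [Module R M] (k l : ℕ) (h : k ≤ l) :
    Ek a i M k →ₗ[R] Ek a i M l :=
  (Abelian.Ext.mk₀ (trk a k l h)).precompOfLinear R (ModuleCat.of R M) (zero_add i)

lemma Tk_apply (i : ℕ) (M : Type u) [AddCommGroup M] [Module R M] (k l : ℕ) (h : k ≤ l) (x : Ek a i M k) :
  Tk a i M k l h x = (Abelian.Ext.mk₀ (trk a k l h)).comp x (zero_add i) := rfl

/-- local cohomology as a type -/
abbrev lc (i : ℕ) (M : Type u) [AddCommGroup M] [Module R M] : Type u :=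
  (localCohomology a i).obj (ModuleCat.of R M)

lemma lc_colim (i : ℕ) (M : Type u) [AddCommGroup M] [Module R M] :
    ∃ ι : ∀ k, Ek a i M k →ₗ[R] lc a i M, IsColim (Tk a i M) ι := by
  have := localCohomology.hasColimitDiagram.{u, 0} (localCohomology.idealPowersDiagram a) i
  let F := localCohomology.diagram (localCohomology.idealPowersDiagram a) i
  let G := F ⋙ (evaluation _ _).obj (ModuleCat.of R M)
  let c : Limits.Cocone G := ((evaluation _ _).obj (ModuleCat.of R M)).mapCocone (Limits.colimit.cocone F)
  let hc : Limits.IsColimit c := Limits.isColimitOfPreserves _ (Limits.colimit.isColimit F)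
  let ι : ∀ k, Ek a i M k →ₗ[R] lc a i M := fun k =>
    (c.ι.app (Opposite.op (Opposite.op k))).hom ∘ₗ (extE (Qk a k) (ModuleCat.of R M) i).toLinearMap
  have hmap : ∀ k l (f : Opposite.op (Opposite.op k) ⟶ Opposite.op (Opposite.op l)) (h : k ≤ l) (x : Ek a i M k),
      G.map f (extE (Qk a k) (ModuleCat.of R M) i x) = extE (Qk a l) (ModuleCat.of R M) i (Tk a i M k l h x) := by
    intro k l f h x
    exact extE_nat (trk a k l h) (ModuleCat.of R M) i x
  have : Limits.PreservesFilteredColimitsOfSize.{0, 0} (forget (ModuleCat.{u} R)) :=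
    Limits.preservesFilteredColimitsOfSize_shrink.{0, u, 0, u} _
  have : Limits.PreservesColimit G (forget (ModuleCat.{u} R)) := inferInstance
  refine ⟨ι, ?_, ?_, ?_⟩
  · intro k l h x
    let f : Opposite.op (Opposite.op k) ⟶ Opposite.op (Opposite.op l) := (homOfLE h).op.op
    have h1 := ConcreteCategory.congr_hom (c.w f) (extE (Qk a k) (ModuleCat.of R M) i x)
    refine Eq.trans ?_ h1
    change _ = c.ι.app (Opposite.op (Opposite.op l)) (G.map f (extE (Qk a k) (ModuleCat.of R M) i x))
    rw [hmap k l f h x]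
    rfl
  · intro y
    obtain ⟨j, z, hz⟩ := Limits.Concrete.isColimit_exists_rep G hc y
    obtain ⟨x, rfl⟩ := (extE (Qk a j.unop.unop) (ModuleCat.of R M) i).surjective z
    exact ⟨j.unop.unop, x, hz⟩
  · intro k x hx
    have hx' : c.ι.app (Opposite.op (Opposite.op k)) (extE (Qk a k) (ModuleCat.of R M) i x) =
      c.ι.app (Opposite.op (Opposite.op k)) 0 := by rw [map_zero]; exact hx
    obtain ⟨j, f, g, h⟩ := (Limits.Concrete.isColimit_rep_eq_iff_exists G hc _ _).1 hx'
    have hkl : k ≤ j.unop.unop := f.unop.unop.down.down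
    refine ⟨j.unop.unop, hkl, ?_⟩
    have h2 := hmap k j.unop.unop f hkl x
    apply (extE (Qk a j.unop.unop) (ModuleCat.of R M) i).injective
    rw [← h2, map_zero]
    refine h.trans ?_
    exact map_zero (G.map g).hom

end LC
end Cofin

set_option linter.unusedSectionVars false
namespace Cofin
section Gam
variable {R : Type u} [CommRing R] [IsNoetherianRing R] (a : Ideal R)
variable (M : Type u) [AddCommGroup M] [Module R M]

/-- the torsion submodule -/
def gam : Submodule R M where
  carrier := {m | ∃ k : ℕ, ∀ r ∈ a ^ k, r • m = 0}
  add_mem' := by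
    rintro x y ⟨k, hk⟩ ⟨l, hl⟩
    refine ⟨k + l, fun r hr => ?_⟩
    rw [smul_add, hk r (Ideal.pow_le_pow_right (by omega) hr),
      hl r (Ideal.pow_le_pow_right (by omega) hr), add_zero]
  zero_mem' := ⟨0, fun r _ => smul_zero r⟩
  smul_mem' := by
    rintro c x ⟨k, hk⟩
    exact ⟨k, fun r hr => by rw [smul_comm, hk r hr, smul_zero]⟩

variable {M}
lemma mem_gam {m : M} : m ∈ gam a M ↔ ∃ k : ℕ, ∀ r ∈ a ^ k, r • m = 0 := Iff.rfl

variable (M)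
lemma tors_gam : Tors a (gam a M) := by
  rintro ⟨x, k, hk⟩
  exact ⟨k, fun r hr => Subtype.ext (hk r hr)⟩

variable {a M}
lemma pow_smul_gam {m : M} (k : ℕ) (h : ∀ r ∈ a ^ k, r • m ∈ gam a M) : m ∈ gam a M := by
  obtain ⟨s, hs⟩ := (isNoetherianRing_iff_ideal_fg R).1 inferInstance (a ^ k)
  have h1 : ∀ r ∈ s, ∃ l : ℕ, ∀ c ∈ a ^ l, c • (r • m) = 0 := fun r hr =>
    h r (hs ▸ Ideal.subset_span hr)
  choose! l hl using h1
  let N := s.sup l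
  have h2 : ∀ r ∈ a ^ k, ∀ c ∈ a ^ N, (c * r) • m = 0 := by
    intro r hr c hc
    rw [← hs] at hr
    induction hr using Submodule.span_induction with
    | mem r hr =>
      rw [mul_smul]
      exact hl r hr c (Ideal.pow_le_pow_right (Finset.le_sup (f := l) hr) hc)
    | zero => simp
    | add x y _ _ hx hy => rw [mul_add, add_smul, hx, hy, add_zero]
    | smul d x _ hx => rw [smul_eq_mul, mul_left_comm, mul_smul, hx, smul_zero]
  refine ⟨N + k, fun r hr => ?_⟩
  rw [pow_add] at hr
  induction hr using Submodule.mul_induction_on' with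
  | mem_mul_mem c hc d hd => exact h2 d hd c hc
  | add x _ y _ hx hy => rw [add_smul, hx, hy, add_zero]

lemma gam_quot : gam a (M ⧸ gam a M) = ⊥ := by
  rw [eq_bot_iff]
  intro x hx
  obtain ⟨m, rfl⟩ := Submodule.Quotient.mk_surjective _ x
  obtain ⟨k, hk⟩ := hx
  rw [Submodule.mem_bot, Submodule.Quotient.mk_eq_zero]
  refine pow_smul_gam k fun r hr => ?_
  rw [← Submodule.Quotient.mk_eq_zero, Submodule.Quotient.mk_smul]
  exact hk r hr

lemma gam_injective (hM : Module.Injective R M) : Module.Injective R (gam a M) := by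
  apply Module.Baer.injective
  intro I g
  obtain ⟨s, hs⟩ := (isNoetherianRing_iff_ideal_fg R).1 inferInstance I
  have hsI : ∀ x ∈ s, x ∈ I := fun x hx => hs ▸ Ideal.subset_span hx
  have h1 : ∀ x : R, ∃ l : ℕ, ∀ hx : x ∈ I, ∀ c ∈ a ^ l, c • (g ⟨x, hx⟩) = 0 := by
    intro x
    by_cases hx : x ∈ I
    · obtain ⟨l, hl⟩ := tors_gam a M (g ⟨x, hx⟩)
      exact ⟨l, fun _ => hl⟩
    · exact ⟨0, fun h => absurd h hx⟩
  choose l hl using h1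
  let n := s.sup l
  have hn : ∀ c ∈ a ^ n, ∀ x (hx : x ∈ I), c • g ⟨x, hx⟩ = 0 := by
    intro c hc x hx
    have hx' : x ∈ Ideal.span (s : Set R) := by rw [← hs] at hx; exact hx
    have : ∃ hx : x ∈ I, c • g ⟨x, hx⟩ = 0 := by
      clear hx
      induction hx' using Submodule.span_induction with
      | mem r hr => exact ⟨hsI r hr, hl r _ c (Ideal.pow_le_pow_right (Finset.le_sup (f := l) hr) hc)⟩
      | zero => exact ⟨I.zero_mem, by
          have : (⟨0, I.zero_mem⟩ : I) = 0 := rfl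
          rw [this, map_zero, smul_zero]⟩
      | add x y _ _ hx hy =>
        obtain ⟨hx, hx'⟩ := hx
        obtain ⟨hy, hy'⟩ := hy
        refine ⟨I.add_mem hx hy, ?_⟩
        have : (⟨x + y, I.add_mem hx hy⟩ : I) = ⟨x, hx⟩ + ⟨y, hy⟩ := rfl
        rw [this, map_add, smul_add, hx', hy', add_zero]
      | smul d x _ hx =>
        obtain ⟨hx, hx'⟩ := hx
        refine ⟨I.smul_mem d hx, ?_⟩
        have : (⟨d • x, I.smul_mem d hx⟩ : I) = d • ⟨x, hx⟩ := rfl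
        rw [this, map_smul, smul_comm, hx', smul_zero]
    obtain ⟨_, h⟩ := this
    exact h
  obtain ⟨k, hk⟩ := Ideal.exists_pow_inf_eq_pow_smul a (M := R) I
  have hAR : ∀ x (hx : x ∈ I), x ∈ a ^ (n + k) → g ⟨x, hx⟩ = 0 := by
    intro x hx hxa
    have h2 := hk (n + k) (by omega)
    rw [Nat.add_sub_cancel] at h2
    have h3 : x ∈ a ^ n • (a ^ k • (⊤ : Submodule R R) ⊓ I) := by
      rw [← h2]
      refine ⟨?_, hx⟩
      have := Submodule.smul_mem_smul hxa (Submodule.mem_top : (1 : R) ∈ (⊤ : Submodule R R))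
      simpa using this
    have : ∃ hx : x ∈ I, g ⟨x, hx⟩ = 0 := by
      clear hx hxa
      induction h3 using Submodule.smul_induction_on' with
      | smul r hr y hy =>
        refine ⟨I.smul_mem r hy.2, ?_⟩
        have : (⟨r • y, I.smul_mem r hy.2⟩ : I) = r • ⟨y, hy.2⟩ := rfl
        rw [this, map_smul]
        exact hn r hr y hy.2
      | add x _ y _ hx hy =>
        obtain ⟨hx, hx'⟩ := hx
        obtain ⟨hy, hy'⟩ := hy
        refine ⟨I.add_mem hx hy, ?_⟩
        have : (⟨x + y, I.add_mem hx hy⟩ : I) = ⟨x, hx⟩ + ⟨y, hy⟩ := rfl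
        rw [this, map_add, hx', hy', add_zero]
    obtain ⟨_, h⟩ := this
    exact h
  let J := a ^ (n + k)
  let j : I →ₗ[R] R ⧸ J := J.mkQ ∘ₗ I.subtype
  have hjk : LinearMap.ker j ≤ LinearMap.ker ((gam a M).subtype ∘ₗ g) := by
    intro x hx
    have hx' : x.1 ∈ J := (Submodule.Quotient.mk_eq_zero J).1 hx
    have := hAR x.1 x.2 hx'
    change ((g x : gam a M) : M) = 0
    rw [show x = ⟨x.1, x.2⟩ from rfl, this]; rfl
  let f1 : (I ⧸ LinearMap.ker j) →ₗ[R] R ⧸ J := Submodule.liftQ _ j le_rfl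
  have hf1 : Function.Injective f1 := LinearMap.ker_eq_bot.1 (Submodule.ker_liftQ_eq_bot _ _ _ le_rfl)
  obtain ⟨h, hh⟩ := hM.out f1 hf1 (Submodule.liftQ _ _ hjk)
  refine ⟨LinearMap.codRestrict (gam a M) (h ∘ₗ J.mkQ) ?_, ?_⟩
  · intro c
    refine ⟨n + k, fun r hr => ?_⟩
    rw [← map_smul]
    have : J.mkQ (r • c) = 0 := (Submodule.Quotient.mk_eq_zero J).2 (J.mul_mem_right c hr)
    rw [LinearMap.comp_apply, this, map_zero]
  · intro x hx
    ext
    exact hh (Submodule.Quotient.mk ⟨x, hx⟩)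

lemma quot_gam_injective (hM : Module.Injective R M) : Module.Injective R (M ⧸ gam a M) := by
  have hG := gam_injective (a := a) hM
  obtain ⟨ρ, hρ⟩ := hG.out (gam a M).subtype (Submodule.injective_subtype _) LinearMap.id
  let s : (M ⧸ gam a M) →ₗ[R] M := Submodule.liftQ _ (LinearMap.id - (gam a M).subtype ∘ₗ ρ) (by
    intro x hx
    have := hρ ⟨x, hx⟩
    change x - ((ρ x : gam a M) : M) = 0
    change ρ x = ⟨x, hx⟩ at this
    rw [this, sub_self])
  refine ⟨fun X Y _ _ _ _ f hf g => ?_⟩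
  obtain ⟨h, hh⟩ := hM.out f hf (s ∘ₗ g)
  refine ⟨(gam a M).mkQ ∘ₗ h, fun x => ?_⟩
  rw [LinearMap.comp_apply, hh x, LinearMap.comp_apply]
  obtain ⟨m, hm⟩ := Submodule.Quotient.mk_surjective _ (g x)
  rw [← hm]
  change Submodule.Quotient.mk (m - ((ρ m : gam a M) : M)) = _
  rw [Submodule.Quotient.mk_sub, (Submodule.Quotient.mk_eq_zero _).2 (ρ m).2, sub_zero]

variable (R M)
lemma enough_inj : ∃ (E : Type u) (_ : AddCommGroup E) (_ : Module R E) (j : M →ₗ[R] E),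
    Module.Injective R E ∧ Function.Injective j := by
  let X : ModuleCat.{u} R := ModuleCat.of R M
  let E : ModuleCat.{u} R := Injective.under X
  have hE : Injective (ModuleCat.of R E) := show Injective (Injective.under X) from inferInstance
  refine ⟨E, inferInstance, inferInstance, (Injective.ι X).hom, ?_, ?_⟩
  · exact Module.injective_module_of_injective_object R E
  · exact (ModuleCat.mono_iff_injective _).1 inferInstance

variable {R M}
lemma embed_free (hM : gam a M = ⊥) :
    ∃ (E : Type u) (_ : AddCommGroup E) (_ : Module R E) (j : M →ₗ[R] E),
    Module.Injective R E ∧ gam a E = ⊥ ∧ Function.Injective j := by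
  obtain ⟨E, _, _, j, hE, hj⟩ := enough_inj R M
  refine ⟨E ⧸ gam a E, inferInstance, inferInstance, (gam a E).mkQ ∘ₗ j,
    quot_gam_injective hE, gam_quot, ?_⟩
  rw [← LinearMap.ker_eq_bot, eq_bot_iff]
  intro x hx
  obtain ⟨k, hk⟩ := (Submodule.Quotient.mk_eq_zero _).1 hx
  rw [← hM]
  exact ⟨k, fun r hr => hj (by rw [map_smul, hk r hr, map_zero])⟩

lemma embed_tors (hM : Tors a M) :
    ∃ (E : Type u) (_ : AddCommGroup E) (_ : Module R E) (j : M →ₗ[R] E),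
    Module.Injective R E ∧ Tors a E ∧ Function.Injective j := by
  obtain ⟨E, _, _, j, hE, hj⟩ := enough_inj R M
  refine ⟨gam a E, inferInstance, inferInstance, j.codRestrict (gam a E) ?_,
    gam_injective hE, tors_gam a E, ?_⟩
  · intro m
    obtain ⟨k, hk⟩ := hM m
    exact ⟨k, fun r hr => by rw [← map_smul, hk r hr, map_zero]⟩
  · intro x y h
    exact hj (congrArg Subtype.val h)

lemma ext_free_zero {J : Ideal R} (hM : Module.Injective R M) (h0 : ann0 J M = ⊥) (i : ℕ)
    (x : Abelian.Ext.{u} (ModuleCat.of R (R ⧸ J)) (ModuleCat.of R M) i) : x = 0 := by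
  cases i with
  | zero =>
    apply (extZeroEquiv J M).injective
    rw [map_zero]
    refine LinearMap.ext fun z => ?_
    have : (extZeroEquiv J M x) z ∈ ann0 J M := by
      intro r hr
      rw [← map_smul]
      obtain ⟨c, rfl⟩ := Ideal.Quotient.mk_surjective z
      have : r • Ideal.Quotient.mk J c = 0 := by
        rw [Algebra.smul_def, Ideal.Quotient.algebraMap_eq, Ideal.Quotient.eq_zero_iff_mem.2 hr, zero_mul]
      rw [this, map_zero]
    rw [h0] at this
    exact this
  | succ i =>
    have := Module.injective_object_of_injective_module R M
    exact Abelian.Ext.eq_zero_of_injective x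

lemma ext_succ_zero {J : Ideal R} (hM : Module.Injective R M) (i : ℕ)
    (x : Abelian.Ext.{u} (ModuleCat.of R (R ⧸ J)) (ModuleCat.of R M) (i+1)) : x = 0 := by
  have := Module.injective_object_of_injective_module R M
  exact Abelian.Ext.eq_zero_of_injective x

end Gam
end Cofin

set_option linter.unusedSectionVars false
namespace Cofin
section LCprops
variable {R : Type u} [CommRing R] [IsNoetherianRing R] (a : Ideal R)
variable (M : Type u) [AddCommGroup M] [Module R M]

lemma tors_lc (i : ℕ) : Tors a (lc a i M) := by
  obtain ⟨ι, hι⟩ := lc_colim a i M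
  intro y
  obtain ⟨k, x, rfl⟩ := hι.surj y
  refine ⟨k, fun r hr => ?_⟩
  rw [← map_smul, ext_smul_zero (a ^ k) _ i hr x, map_zero]

/-- evaluation at one -/
noncomputable def ev0 (k : ℕ) : Ek a 0 M k →ₗ[R] gam a M where
  toFun x := ⟨extZeroEquiv (a ^ k) M x 1, k, fun r hr => by
    rw [← LinearMap.smul_apply, ← map_smul, ext_smul_zero (a ^ k) _ 0 hr x, map_zero, LinearMap.zero_apply]⟩
  map_add' x y := Subtype.ext (LinearMap.congr_fun (map_add (extZeroEquiv (a ^ k) M) x y) 1)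
  map_smul' r x := Subtype.ext (LinearMap.congr_fun (map_smul (extZeroEquiv (a ^ k) M) r x) 1)

lemma extZero_mk₀ (J : Ideal R) (f : ModuleCat.of R (R ⧸ J) ⟶ ModuleCat.of R M) :
    extZeroEquiv J M (Abelian.Ext.mk₀ f) = f.hom := by
  have : (Abelian.Ext.linearEquiv₀ (R := R)) (Abelian.Ext.mk₀ f) = f := by
    rw [← LinearEquiv.eq_symm_apply]; rfl
  change ModuleCat.homLinearEquiv (S := R) (Abelian.Ext.linearEquiv₀ (R := R) (Abelian.Ext.mk₀ f)) = _
  rw [this]; rfl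

variable {M}
lemma hom_ext_one {J : Ideal R} {f g : (R ⧸ J) →ₗ[R] M} (h1 : f 1 = g 1) : f = g := by
  refine LinearMap.ext fun z => ?_
  obtain ⟨r, rfl⟩ := Ideal.Quotient.mk_surjective z
  have : Ideal.Quotient.mk J r = r • (1 : R ⧸ J) := by simp [Algebra.smul_def]
  rw [this, map_smul, map_smul, h1]

lemma exists_hom {J : Ideal R} (m : M) (h : ∀ r ∈ J, r • m = 0) : ∃ f : (R ⧸ J) →ₗ[R] M, f 1 = m := by
  refine ⟨Submodule.liftQ J (LinearMap.toSpanSingleton R M m) ?_, ?_⟩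
  · intro r hr; simpa using h r hr
  · exact (Submodule.liftQ_apply J (LinearMap.toSpanSingleton R M m) 1).trans (one_smul _ _)

lemma ext0_eq_mk₀ {X Y : ModuleCat.{u} R} (x : Abelian.Ext.{u} X Y 0) : ∃ f : X ⟶ Y, x = Abelian.Ext.mk₀ f := by
  obtain ⟨f, hf⟩ := (Abelian.Ext.mk₀_bijective X Y).2 x
  exact ⟨f, hf.symm⟩

variable (M)
lemma gam_colim : IsColim (Tk a 0 M) (ev0 a M) := by
  refine ⟨?_, ?_, ?_⟩
  · intro k l h x
    obtain ⟨f, rfl⟩ := ext0_eq_mk₀ x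
    rw [Tk_apply, Abelian.Ext.mk₀_comp_mk₀]
    apply Subtype.ext
    change extZeroEquiv (a ^ l) M (Abelian.Ext.mk₀ _) 1 = extZeroEquiv (a ^ k) M (Abelian.Ext.mk₀ _) 1
    rw [extZero_mk₀, extZero_mk₀]
    rfl
  · rintro ⟨m, k, hk⟩
    obtain ⟨f, hf⟩ := exists_hom m hk
    refine ⟨k, Abelian.Ext.mk₀ (ModuleCat.ofHom f), Subtype.ext ?_⟩
    change extZeroEquiv (a ^ k) M (Abelian.Ext.mk₀ _) 1 = m
    rw [extZero_mk₀]
    exact hf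
  · intro k x hx
    refine ⟨k, le_rfl, ?_⟩
    have : x = 0 := by
      apply (extZeroEquiv (a ^ k) M).injective
      rw [map_zero]
      exact hom_ext_one (congrArg Subtype.val hx)
    rw [this, map_zero]

lemma lc_zero_equiv : Nonempty (lc a 0 M ≃ₗ[R] gam a M) := by
  obtain ⟨ι, hι⟩ := lc_colim a 0 M
  exact hι.equiv (gam_colim a M) (fun k => LinearMap.id) (fun _ _ _ _ => rfl)
    (fun k x hx => ⟨k, le_rfl, by rw [show x = 0 from hx, map_zero]⟩)
    (fun k y => ⟨k, le_rfl, Tk a 0 M k k le_rfl y, rfl⟩)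

variable {M}
lemma dies {a : Ideal R} (i : ℕ) : ∀ (A : Type u) [AddCommGroup A] [Module R A], Tors a A →
    ∀ k (x : Ek a (i+1) A k), ∃ l h, Tk a (i+1) A k l h x = 0 := by
  induction i with
  | zero =>
    intro A _ _ hA k x
    obtain ⟨E, _, _, j, hE, hEt, hj⟩ := embed_tors hA
    have hs := sc_exact hj (Submodule.mkQ_surjective (LinearMap.range j))
      (fun x => by simp)
    obtain ⟨y, hy⟩ := Abelian.Ext.covariant_sequence_exact₁ (Qk a k) hs x
      (ext_succ_zero hE 0 _) (zero_add 1)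
    obtain ⟨f, rfl⟩ := ext0_eq_mk₀ y
    obtain ⟨e, he⟩ := Submodule.mkQ_surjective (LinearMap.range j) (f.hom 1)
    obtain ⟨m, hm⟩ := hEt e
    obtain ⟨g, hg⟩ := exists_hom (J := a ^ (k + m)) e
      (fun r hr => hm r (Ideal.pow_le_pow_right (by omega) hr))
    refine ⟨k + m, by omega, ?_⟩
    have hfac : trk a k (k+m) (by omega) ≫ f = ModuleCat.ofHom g ≫ ModuleCat.ofHom (LinearMap.range j).mkQ := by
      refine ModuleCat.hom_ext (hom_ext_one ?_)
      change f.hom 1 = (LinearMap.range j).mkQ (g 1)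
      rw [hg, he]
    rw [Tk_apply, ← hy, ← Abelian.Ext.comp_assoc _ _ _ (zero_add 0) (zero_add 1) (by omega),
      Abelian.Ext.mk₀_comp_mk₀]
    erw [hfac]
    rw [← Abelian.Ext.mk₀_comp_mk₀, Abelian.Ext.comp_assoc _ _ _ (zero_add 0) (zero_add 1) (by omega)]
    erw [hs.comp_extClass]
    rw [Abelian.Ext.comp_zero]
  | succ i ih =>
    intro A _ _ hA k x
    obtain ⟨E, _, _, j, hE, hEt, hj⟩ := embed_tors hA
    have hs := sc_exact hj (Submodule.mkQ_surjective (LinearMap.range j))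
      (fun x => by simp)
    obtain ⟨y, hy⟩ := Abelian.Ext.covariant_sequence_exact₁ (Qk a k) hs x
      (ext_succ_zero hE (i+1) _) rfl
    obtain ⟨l, h, hl⟩ := ih (E ⧸ LinearMap.range j) (hEt.of_surj _ (Submodule.mkQ_surjective _)) k y
    refine ⟨l, h, ?_⟩
    rw [Tk_apply] at hl ⊢
    rw [← hy, ← Abelian.Ext.comp_assoc _ _ _ (zero_add (i+1)) rfl (by omega)]
    erw [hl]
    rw [Abelian.Ext.zero_comp]

/-- naturality of `Tk` for postcomposition -/
lemma Tk_post {A B : Type u} [AddCommGroup A] [Module R A] [AddCommGroup B] [Module R B] {p q s : ℕ}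
    (β : Abelian.Ext.{u} (ModuleCat.of R A) (ModuleCat.of R B) q) (hs : p + q = s) (k l : ℕ) (h : k ≤ l)
    (x : Ek a p A k) :
    β.postcompOfLinear R (Qk a l) hs (Tk a p A k l h x) = Tk a s B k l h (β.postcompOfLinear R (Qk a k) hs x) := by
  change (Abelian.Ext.comp (Abelian.Ext.mk₀ _) x (zero_add p)).comp β hs =
    (Abelian.Ext.mk₀ _).comp (x.comp β hs) (zero_add s)
  rw [Abelian.Ext.comp_assoc _ _ _ (zero_add p) hs (by omega)]

lemma Tk_trans {M : Type u} [AddCommGroup M] [Module R M] {i : ℕ} (k l m : ℕ) (h : k ≤ l) (h' : l ≤ m) (x : Ek a i M k) :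
    Tk a i M l m h' (Tk a i M k l h x) = Tk a i M k m (h.trans h') x := by
  change (Abelian.Ext.mk₀ _).comp ((Abelian.Ext.mk₀ _).comp x (zero_add i)) (zero_add i) = (Abelian.Ext.mk₀ _).comp x (zero_add i)
  rw [← Abelian.Ext.comp_assoc _ _ _ (zero_add 0) (zero_add i) (by omega), Abelian.Ext.mk₀_comp_mk₀]
  congr 2
  refine ModuleCat.hom_ext (hom_ext_one ?_)
  rfl

variable (M) in
lemma lc_quot_equiv (i : ℕ) : Nonempty (lc a (i+1) M ≃ₗ[R] lc a (i+1) (M ⧸ gam a M)) := by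
  obtain ⟨ι, hι⟩ := lc_colim a (i+1) M
  obtain ⟨ι', hι'⟩ := lc_colim a (i+1) (M ⧸ gam a M)
  have hs := sc_exact (Submodule.injective_subtype _) (Submodule.mkQ_surjective _) (exact_sub_quot (gam a M))
  refine hι.equiv hι' (fun k => (Abelian.Ext.mk₀ (ModuleCat.ofHom (gam a M).mkQ)).postcompOfLinear R (Qk a k)
    (add_zero (i+1))) (fun k l h x => Tk_post a _ _ k l h x) ?_ ?_
  · intro k x hx
    obtain ⟨y, hy⟩ := Abelian.Ext.covariant_sequence_exact₂ _ hs x hx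
    obtain ⟨l, h, hl⟩ := dies i (gam a M) (tors_gam a M) k y
    refine ⟨l, h, ?_⟩
    have := Tk_post a (Abelian.Ext.mk₀ (ModuleCat.ofHom (gam a M).subtype)) (add_zero (i+1)) k l h y
    rw [hl, map_zero] at this
    rw [← hy]
    exact this.symm
  · intro k y
    let δ := hs.extClass.postcompOfLinear R (Qk a k) (rfl : i + 1 + 1 = i + 1 + 1)
    obtain ⟨l, h, hl⟩ := dies (i+1) (gam a M) (tors_gam a M) k (δ y)
    have := Tk_post a hs.extClass (rfl : i + 1 + 1 = i + 1 + 1) k l h y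
    obtain ⟨x, hx⟩ := Abelian.Ext.covariant_sequence_exact₃ _ hs (Tk a (i+1) (M ⧸ gam a M) k l h y) rfl
      (this.trans hl)
    exact ⟨l, h, x, hx⟩

lemma ann0_pow_bot {a : Ideal R} (hM : gam a M = ⊥) (k : ℕ) : ann0 (a ^ k) M = ⊥ := by
  rw [eq_bot_iff, ← hM]
  intro x hx
  exact ⟨k, hx⟩

lemma lc_shift {E : Type u} [AddCommGroup E] [Module R E] (j : M →ₗ[R] E) (hj : Function.Injective j)
    (hE : Module.Injective R E) (h0 : gam a E = ⊥) (i : ℕ) :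
    Nonempty (lc a i (E ⧸ LinearMap.range j) ≃ₗ[R] lc a (i+1) M) := by
  obtain ⟨ι, hι⟩ := lc_colim a i (E ⧸ LinearMap.range j)
  obtain ⟨ι', hι'⟩ := lc_colim a (i+1) M
  have hs := sc_exact hj (Submodule.mkQ_surjective (LinearMap.range j)) (fun x => by simp)
  refine hι.equiv hι' (fun k => hs.extClass.postcompOfLinear R (Qk a k) rfl)
    (fun k l h x => Tk_post a _ _ k l h x) ?_ ?_
  · intro k x hx
    obtain ⟨y, hy⟩ := Abelian.Ext.covariant_sequence_exact₃ _ hs x rfl hx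
    refine ⟨k, le_rfl, ?_⟩
    have hy0 : y = 0 := ext_free_zero hE (ann0_pow_bot h0 k) i y
    rw [← hy, hy0, Abelian.Ext.zero_comp, map_zero]
  · intro k y
    obtain ⟨x, hx⟩ := Abelian.Ext.covariant_sequence_exact₁ _ hs (Tk a (i+1) M k k le_rfl y)
      (ext_free_zero hE (ann0_pow_bot h0 k) (i+1) _) rfl
    exact ⟨k, le_rfl, x, hx⟩

theorem main (t : ℕ) : ∀ (M : Type u) [AddCommGroup M] [Module R M], (∀ i, Fin' a i M) →
    (∀ i < t, FD1 R (lc a i M)) → ∀ i < t, ∀ j, Fin' a j (lc a i M) := by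
  induction t with
  | zero => intro M _ _ _ _ i hi; omega
  | succ t ih =>
    intro M _ _ hM hFD i hi j
    obtain ⟨e0⟩ := lc_zero_equiv a M
    have hex := exact_sub_quot (gam a M)
    have hinj := Submodule.injective_subtype (gam a M)
    have hsurj := Submodule.mkQ_surjective (gam a M)
    have hq0 : gam a (M ⧸ gam a M) = ⊥ := gam_quot
    have hF0 : Fin' a 0 (M ⧸ gam a M) := by
      rw [fin_zero_iff]
      have := ann0_pow_bot hq0 1
      rw [pow_one] at this
      rw [this]
      exact Submodule.fg_bot
    have hG : ∀ i, Fin' a i (gam a M) := crit a (tors_gam a M) ((hFD 0 (by omega)).congr e0)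
      (Fin'.left_zero a hinj (hM 0)) (Fin'.left a hinj hsurj hex hF0 (hM 1))
    cases i with
    | zero => exact Fin'.congr a e0.symm (hG j)
    | succ i =>
      have hQ : ∀ i, Fin' a i (M ⧸ gam a M) := fun i => Fin'.right a hinj hsurj hex (hM i) (hG (i+1))
      obtain ⟨E, _, _, f, hE, hE0, hf⟩ := embed_free hq0
      have hEF : ∀ i, Fin' a i E := by
        intro i
        have h1 := ann0_pow_bot hE0 1
        rw [pow_one] at h1
        have : Subsingleton (Abelian.Ext.{u} (ModuleCat.of R (R ⧸ a)) (ModuleCat.of R E) i) :=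
          ⟨fun x y => by rw [ext_free_zero hE h1 i x, ext_free_zero hE h1 i y]⟩
        unfold Fin'
        infer_instance
      have hC : ∀ i, Fin' a i (E ⧸ LinearMap.range f) := fun i =>
        Fin'.right a hf (Submodule.mkQ_surjective (LinearMap.range f)) (fun x => by simp) (hEF i) (hQ (i+1))
      have he : ∀ i, Nonempty (lc a i (E ⧸ LinearMap.range f) ≃ₗ[R] lc a (i+1) M) := fun i => by
        obtain ⟨e1⟩ := lc_quot_equiv a M i
        obtain ⟨e2⟩ := lc_shift a f hf hE hE0 i
        exact ⟨e2.trans e1.symm⟩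
      obtain ⟨e⟩ := he i
      refine Fin'.congr a e (ih (E ⧸ LinearMap.range f) hC (fun i hi => ?_) i (by omega) j)
      obtain ⟨e'⟩ := he i
      exact (hFD (i+1) (by omega)).congr e'.symm

lemma supp_of_tors (h : Tors a M) : Module.support R M ⊆ PrimeSpectrum.zeroLocus (a : Set R) := by
  intro p hp r hr
  obtain ⟨m, hm⟩ := Module.mem_support_iff_exists_annihilator.1 hp
  obtain ⟨k, hk⟩ := h m
  refine p.2.mem_of_pow_mem k (hm ?_)
  rw [Submodule.mem_annihilator_span_singleton]
  exact hk _ (Ideal.pow_mem_pow hr k)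

end LCprops
end Cofin

theorem stmt11 {R : Type u} [CommRing R] [IsNoetherianRing R] (a : Ideal R)
    (n : ℕ) (hn : n ≤ 1) (M : ModuleCat.{u} R) (hM : Nontrivial M)
    (hfg : Module.Finite R M) (t : ℕ)
    (hFD : ∀ i < t, ∃ N : Submodule R ((localCohomology a i).obj M), N.FG ∧
      Order.krullDim (Module.support R (((localCohomology a i).obj M) ⧸ N)) ≤
        (n : WithBot (WithTop ℕ))) :
    ∀ i < t, IsCofinite a ((localCohomology a i).obj M) := by
  intro i hi
  refine ⟨Cofin.supp_of_tors a (Cofin.tors_lc a M i), fun j => ?_⟩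
  refine (Cofin.finite_extQuot_iff a j _).2 ?_
  refine Cofin.main a t M (fun j => Cofin.Fin'.of_finite a M j) (fun i hi => ?_) i hi j
  obtain ⟨N, hN, hd⟩ := hFD i hi
  refine ⟨N, hN, Cofin.D1.of_dim (hd.trans ?_)⟩
  exact Nat.mono_cast (α := WithBot (WithTop ℕ)) hn |>.trans (le_of_eq Nat.cast_one)
end
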